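/- If a map F ∈ S(Ω) has a periodic orbit of strips of period 2^n·q with n ≥ 0 and q ≥ 1 odd, then h(F) ≥ log(λ_q)/2^n, where λ_1 = 1 and, for each odd q ≥ 3, λ_q is the largest root of the polynomial x^q − 2x^{q−2} − 1. Moreover, for every m = 2^n·q with n ≥ 0 and q ≥ 1 odd, there exists a map F_m ∈ S(Ω) with a periodic orbit of strips of period m such that h(F_m) = log(λ_q)/2^n. -/

import Mathlib

open Dynamics Set

noncomputable section

/-- The circle `S¹ = ℝ/ℤ`. -/
abbrev S1 : Type := AddCircle (1 : ℝ)

/-- The unit interval `I = [0,1]` as a type. -/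
abbrev II : Type := Set.Icc (0 : ℝ) 1

/-- The cylinder `Ω = S¹ × I`. -/
abbrev Cyl : Type := S1 × II

/-- The fiber of a subset of the cylinder over `θ ∈ S¹`. -/
def fiber (A : Set Cyl) (θ : S1) : Set II := {x : II | (θ, x) ∈ A}

/-- `M_A θ = max {x ∈ I : (θ, x) ∈ A}`. -/
def MA (A : Set Cyl) (θ : S1) : ℝ := sSup (Subtype.val '' fiber A θ)

/-- `m_A θ = min {x ∈ I : (θ, x) ∈ A}`. -/
def mA (A : Set Cyl) (θ : S1) : ℝ := sInf (Subtype.val '' fiber A θ)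

/-- A strip: a closed set projecting onto all of `S¹` whose fibers over a residual
set of `θ`'s are (possibly degenerate) nonempty closed intervals. -/
def IsStrip (A : Set Cyl) : Prop :=
  IsClosed A ∧ (∀ θ : S1, ∃ x : II, (θ, x) ∈ A) ∧
    ∃ G ∈ residual S1, ∀ θ ∈ G, ∃ a b : II, a ≤ b ∧ fiber A θ = Set.Icc a b

/-- `A < B` for strips. -/
def stripLT (A B : Set Cyl) : Prop := ∃ G ∈ residual S1, ∀ θ ∈ G, MA A θ < mA B θ

/-- `A ≤ B` for strips. -/
def stripLE (A B : Set Cyl) : Prop := ∃ G ∈ residual S1, ∀ θ ∈ G, MA A θ ≤ mA B θ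

/-- Two strips are ordered if `A < B` or `B < A`. -/
def StripOrdered (A B : Set Cyl) : Prop := stripLT A B ∨ stripLT B A

/-- Two strips are weakly ordered if `A ≤ B` or `B ≤ A`. -/
def StripWeaklyOrdered (A B : Set Cyl) : Prop := stripLE A B ∨ stripLE B A

/-- The class `S(Ω)` of quasiperiodically forced skew-products on the cylinder:
continuous maps whose first coordinate is an irrational rotation. -/
def IsQPF (F : Cyl → Cyl) : Prop :=
  Continuous F ∧ ∃ ω : ℝ, Irrational ω ∧ ∀ p : Cyl, (F p).1 = p.1 + (ω : S1)

/-- `B` is an `n`-periodic strip of `F`: `F^n(B) = B` and the iterates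
`B, F(B), …, F^{n-1}(B)` are pairwise disjoint and pairwise ordered. -/
def IsPeriodicStripOrbit (F : Cyl → Cyl) (n : ℕ) (B : Set Cyl) : Prop :=
  IsStrip B ∧ F^[n] '' B = B ∧
    ∀ i j : ℕ, i < j → j < n →
      Disjoint (F^[i] '' B) (F^[j] '' B) ∧ StripOrdered (F^[i] '' B) (F^[j] '' B)

/-- A cyclic permutation: the (forward) orbit of any point is everything. -/
def IsCyclicPerm {n : ℕ} (τ : Equiv.Perm (Fin n)) : Prop :=
  ∀ i j : Fin n, ∃ k : ℕ, (τ ^ k) i = j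

/-- `F` exhibits the strips pattern `τ`: it has a periodic orbit of strips,
spatially labelled, moved around according to `τ`. -/
def ExhibitsStripPattern (F : Cyl → Cyl) {n : ℕ} (τ : Equiv.Perm (Fin n)) : Prop :=
  ∃ B : Fin n → Set Cyl,
    (∀ i, IsStrip (B i)) ∧
    (∀ i j : Fin n, i < j → stripLT (B i) (B j)) ∧
    (Pairwise fun i j => Disjoint (B i) (B j)) ∧
    (∀ i, F '' B i = B (τ i))

/-- A continuous interval map has a periodic orbit with interval pattern `τ`. -/
def HasIntervalPattern (f : II → II) {n : ℕ} (τ : Equiv.Perm (Fin n)) : Prop :=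
  ∃ p : Fin n → II, StrictMono p ∧ ∀ i, f (p i) = p (τ i)

/-- `τ` forces `ν` as interval patterns. -/
def ForcesI {n m : ℕ} (τ : Equiv.Perm (Fin n)) (ν : Equiv.Perm (Fin m)) : Prop :=
  ∀ f : II → II, Continuous f → HasIntervalPattern f τ → HasIntervalPattern f ν

/-- `τ` forces `ν` in `Ω`. -/
def ForcesOmega {n m : ℕ} (τ : Equiv.Perm (Fin n)) (ν : Equiv.Perm (Fin m)) : Prop :=
  ∀ F : Cyl → Cyl, IsQPF F → ExhibitsStripPattern F τ → ExhibitsStripPattern F ν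

/-- `p >_Sh q` in the Sharkovskiĭ ordering. -/
def SharkGT (p q : ℕ) : Prop :=
  ∃ i m j l : ℕ, Odd m ∧ Odd l ∧ p = 2 ^ i * m ∧ q = 2 ^ j * l ∧
    ((m = 1 ∧ l = 1 ∧ j < i) ∨ (1 < m ∧ l = 1) ∨
      (1 < m ∧ 1 < l ∧ (i < j ∨ (i = j ∧ m < l))))

/-- The core of a subset of the cylinder. -/
def core (M : Set Cyl) : Set Cyl :=
  ⋂ (G : Set S1) (_ : G ∈ residual S1), closure (M ∩ Prod.fst ⁻¹' G)

/-- A band is a strip equal to its core. -/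
def IsBand (A : Set Cyl) : Prop := IsStrip A ∧ core A = A

/-- Continuity points of a real-valued function on the circle. -/
def contPts (g : S1 → ℝ) : Set S1 := {θ | ContinuousAt g θ}

/-- The top cover `A⁺` of a strip: the closure of the graph of `M_A` restricted to its
residual set of continuity points. -/
def topCover (A : Set Cyl) : Set Cyl :=
  closure {p : Cyl | p.1 ∈ contPts (MA A) ∧ (p.2 : ℝ) = MA A p.1}

/-- The bottom cover `A⁻` of a strip. -/
def botCover (A : Set Cyl) : Set Cyl :=
  closure {p : Cyl | p.1 ∈ contPts (mA A) ∧ (p.2 : ℝ) = mA A p.1}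

/-- `A` positively `F`-covers `B`. -/
def FCoversPos (F : Cyl → Cyl) (A B : Set Cyl) : Prop :=
  stripLE (F '' botCover A) (botCover B) ∧ stripLE (topCover B) (F '' topCover A)

/-- `A` negatively `F`-covers `B`. -/
def FCoversNeg (F : Cyl → Cyl) (A B : Set Cyl) : Prop :=
  stripLE (topCover B) (F '' botCover A) ∧ stripLE (F '' topCover A) (botCover B)

/-- `A` `F`-covers `B`. -/
def FCovers (F : Cyl → Cyl) (A B : Set Cyl) : Prop := FCoversPos F A B ∨ FCoversNeg F A B

/-- An `s`-horseshoe `(J, D)` for `F`. -/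
def IsHorseshoe (F : Cyl → Cyl) (s : ℕ) (J : Set Cyl) (D : Finset (Set Cyl)) : Prop :=
  2 ≤ s ∧ D.card = s ∧ IsBand J ∧
    (∀ L ∈ D, IsBand L ∧ (interior L).Nonempty ∧ FCovers F L J) ∧
    (∀ L ∈ D, ∀ L' ∈ D, L ≠ L' → StripWeaklyOrdered L L')

/-- Topological entropy (cover entropy of the whole space). -/
def hTop {X : Type} [UniformSpace X] (F : X → X) : EReal := coverEntropy F Set.univ

/-- A pseudo-curve: the closure of the graph of a continuous map from a residual
subset of the circle to the interval. -/
def IsPseudoCurve (A : Set Cyl) : Prop :=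
  ∃ G ∈ residual S1, ∃ φ : S1 → II, Continuous (G.restrict φ) ∧
    A = closure {p : Cyl | p.1 ∈ G ∧ p.2 = φ p.1}

/-- The band `E_{AB}` between two pseudo-curves `A < B`. -/
def bandBetween (A B : Set Cyl) : Set Cyl :=
  closure {p : Cyl | p.1 ∈ contPts (MA A) ∧ p.1 ∈ contPts (mA B) ∧
    MA A p.1 < (p.2 : ℝ) ∧ (p.2 : ℝ) < mA B p.1}

/-- `f` is affine on the subinterval `[a, b]` of `I`. -/
def AffineOnIcc (f : II → II) (a b : II) : Prop :=
  ∀ x : II, a ≤ x → x ≤ b →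
    ((b : ℝ) - (a : ℝ)) * ((f x : ℝ) - (f a : ℝ)) =
      ((x : ℝ) - (a : ℝ)) * ((f b : ℝ) - (f a : ℝ))

/-- `f` is the `P`-linear (connect-the-dots) map over the points `p 0 < p 1 < … < p n`:
continuous, affine on each `[p i, p (i+1)]` and constant on both components of
`I ∖ [p 0, p n]`. -/
def IsPLinear {n : ℕ} (f : II → II) (p : Fin (n + 1) → II) : Prop :=
  Continuous f ∧
    (∀ k : Fin n, AffineOnIcc f (p k.castSucc) (p k.succ)) ∧
    (∀ x : II, x ≤ p 0 → f x = f (p 0)) ∧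
    (∀ x : II, p (Fin.last n) ≤ x → f x = f (p (Fin.last n)))

/-- Signed arrow between basic intervals `J_k = [p k, p (k+1)]` and `J_l` in the
`P`-signed Markov graph of `f` (`true` = positive covering, `false` = negative). -/
def IArrow {n : ℕ} (f : II → II) (p : Fin (n + 1) → II) (s : Bool) (k l : Fin n) : Prop :=
  if s then
    (f (p k.castSucc) : ℝ) ≤ (p l.castSucc : ℝ) ∧ (p l.succ : ℝ) ≤ (f (p k.succ) : ℝ)
  else
    (f (p k.succ) : ℝ) ≤ (p l.castSucc : ℝ) ∧ (p l.succ : ℝ) ≤ (f (p k.castSucc) : ℝ)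

/-- A loop of length `m` in the `P`-signed Markov graph of `f`, encoded as `m`-periodic
sequences of vertices (basic intervals) and signs. -/
def IsILoop {n : ℕ} (f : II → II) (p : Fin (n + 1) → II) (m : ℕ)
    (v : ℕ → Fin n) (s : ℕ → Bool) : Prop :=
  0 < m ∧ (∀ i, v (i + m) = v i) ∧ (∀ i, s (i + m) = s i) ∧
    ∀ i, IArrow f p (s i) (v i) (v (i + 1))

/-- A periodic point `x` of (exact) period `m` is associated to the loop with vertex
sequence `v` if `f^i(x) ∈ J_{v i}` for all `i`. -/
def IAssocPt {n : ℕ} (f : II → II) (p : Fin (n + 1) → II) (m : ℕ)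
    (x : II) (v : ℕ → Fin n) : Prop :=
  f^[m] x = x ∧ (∀ i : ℕ, 0 < i → i < m → f^[i] x ≠ x) ∧
    ∀ i : ℕ, p (v i).castSucc ≤ f^[i] x ∧ f^[i] x ≤ p (v i).succ

/-- The sign (`true` = `+`) of the initial segment of length `k` of a signed path. -/
def signAt (s : ℕ → Bool) (k : ℕ) : Bool :=
  decide (Even ((Finset.range k).filter (fun i => s i = false)).card)

/-- Lexicographic ordering of (infinite liftings of) signed paths, comparing the vertex
sequences `v` and `w`; at the first difference the comparison is reversed iff the sign
of the common initial segment is negative. -/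
def seqLT {n : ℕ} (v : ℕ → Fin n) (s : ℕ → Bool) (w : ℕ → Fin n) : Prop :=
  ∃ k : ℕ, (∀ i < k, v i = w i) ∧ v k ≠ w k ∧ (v k < w k ↔ signAt s k = true)

/-- The shift of a sequence by `i`. -/
def shiftSeq {α : Type} (v : ℕ → α) (i : ℕ) : ℕ → α := fun j => v (i + j)

/-- A loop of length `m` (given by `m`-periodic sequences) is simple if it is not the
repetition of a shorter loop. -/
def SimpleLoop {α β : Type} (m : ℕ) (v : ℕ → α) (s : ℕ → β) : Prop :=
  ¬ ∃ d : ℕ, 0 < d ∧ d < m ∧ d ∣ m ∧ (∀ i, v (i + d) = v i) ∧ (∀ i, s (i + d) = s i)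

/-- The basic bands associated to a (spatially labelled) periodic orbit of strips
`B 0 < B 1 < … < B n`: `I_{B_k B_{k+1}} = E_{(B_k)⁺ (B_{k+1})⁻}`. -/
def basicBand {n : ℕ} (B : Fin (n + 1) → Set Cyl) (k : Fin n) : Set Cyl :=
  bandBetween (topCover (B k.castSucc)) (botCover (B k.succ))

/-- Signed arrow between bands in a signed Markov graph of `F`. -/
def BArrow (F : Cyl → Cyl) (s : Bool) (A B : Set Cyl) : Prop :=
  if s then FCoversPos F A B else FCoversNeg F A B

/-- A loop of length `m` in the signed Markov graph of `F` over the basic bands of the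
periodic orbit of strips `B`. -/
def IsBLoop (F : Cyl → Cyl) {n : ℕ} (B : Fin (n + 1) → Set Cyl) (m : ℕ)
    (v : ℕ → Fin n) (s : ℕ → Bool) : Prop :=
  0 < m ∧ (∀ i, v (i + m) = v i) ∧ (∀ i, s (i + m) = s i) ∧
    ∀ i, BArrow F (s i) (basicBand B (v i)) (basicBand B (v (i + 1)))

/-- Equality of patterns given as cyclic permutations of possibly different index sets. -/
def PatternEqNat {a b : ℕ} (τ : Equiv.Perm (Fin a)) (ν : Equiv.Perm (Fin b)) : Prop :=
  a = b ∧ ∀ (i : Fin a) (j : Fin b), (i : ℕ) = (j : ℕ) → ((τ i : ℕ) = (ν j : ℕ))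

/-- The entropy of a strips pattern: the infimum of the entropies of the maps in `S(Ω)`
exhibiting it. -/
def patternEntropy {n : ℕ} (τ : Equiv.Perm (Fin n)) : EReal :=
  sInf {e : EReal | ∃ F : Cyl → Cyl, IsQPF F ∧ ExhibitsStripPattern F τ ∧ e = hTop F}

end


lemma ent_lower {X : Type} [PseudoMetricSpace X] (T : X → X) (a ε : ℝ) (hε : 0 < ε)
    (h : ∃ᶠ n : ℕ in Filter.atTop, ∃ S : Finset X, Real.exp (a * n) ≤ S.card ∧
      ∀ x ∈ S, ∀ y ∈ S, x ≠ y → ∃ k < n, ε ≤ dist (T^[k] x) (T^[k] y)) :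
    (a : EReal) ≤ coverEntropy T Set.univ := by
  have hU : {p : X × X | dist p.1 p.2 < ε / 2} ∈ uniformity X := Metric.dist_mem_uniformity (by positivity)
  refine le_trans ?_ (netEntropyEntourage_le_coverEntropy T Set.univ hU)
  apply Frequently.le_expGrowthSup
  refine h.mono ?_
  rintro n ⟨S, hS, hsep⟩
  have hnet : IsDynNetIn T Set.univ {p : X × X | dist p.1 p.2 < ε / 2} n (S : Set X) := by
    refine ⟨Set.subset_univ _, ?_⟩
    intro x hx y hy hxy
    obtain ⟨k, hk, hd⟩ := hsep x hx y hy hxy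
    rw [Function.onFun, Set.disjoint_left]
    intro z hzx hzy
    rw [mem_ball_dynEntourage] at hzx hzy
    have h1 := hzx k hk
    have h2 := hzy k hk
    simp only [UniformSpace.ball, Set.mem_preimage, Set.mem_setOf_eq] at h1 h2
    have := dist_triangle_right (T^[k] x) (T^[k] y) (T^[k] z)
    linarith
  have h2 := hnet.card_le_netMaxcard
  have h3 : ((S.card : ℕ∞) : ENNReal) ≤ (netMaxcard T Set.univ {p : X × X | dist p.1 p.2 < ε / 2} n : ENNReal) :=
    ENat.toENNReal_mono h2
  refine le_trans ?_ h3
  have e1 : ((a : EReal) * (n : EReal)) = ((a * n : ℝ) : EReal) := by push_cast; rfl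
  rw [e1, EReal.exp_coe]
  calc ENNReal.ofReal (Real.exp (a * n)) ≤ ENNReal.ofReal (S.card : ℝ) := ENNReal.ofReal_le_ofReal hS
    _ = _ := by simp

lemma ent_upper {X : Type} [PseudoMetricSpace X] (T : X → X) (a : ℝ)
    (h : ∀ ε > 0, ∀ᶠ n : ℕ in Filter.atTop, ∃ S : Finset X, (S.card : ℝ) ≤ Real.exp (a * n) ∧
      ∀ x, ∃ y ∈ S, ∀ k < n, dist (T^[k] x) (T^[k] y) < ε) :
    coverEntropy T Set.univ ≤ (a : EReal) := by
  rw [coverEntropy_eq_iSup_basis Metric.uniformity_basis_dist]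
  refine iSup₂_le fun ε hε => ?_
  apply Eventually.expGrowthSup_le
  refine (h ε hε).mono ?_
  rintro n ⟨S, hS, hc⟩
  have hcov : IsDynCoverOf T Set.univ {p : X × X | dist p.1 p.2 < ε} n (S : Set X) := by
    intro x _
    obtain ⟨y, hy, hk⟩ := hc x
    refine ⟨y, hy, ?_⟩
    rw [mem_dynEntourage]
    exact hk
  have h2 := hcov.coverMincard_le_card
  have h3 := ENat.toENNReal_mono h2
  refine le_trans h3 ?_
  have e1 : ((a : EReal) * (n : EReal)) = ((a * n : ℝ) : EReal) := by push_cast; rfl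
  rw [e1, EReal.exp_coe]
  calc _ = ENNReal.ofReal (S.card : ℝ) := by simp
    _ ≤ _ := ENNReal.ofReal_le_ofReal hS


lemma fin_ineq {X Z U d μ : ℝ} {q j : ℕ} (hq : 3 ≤ q) (hj : j ≤ q - 2) (hμ : 0 < μ) (hU : 0 < U) (hd : 0 < d)
    (h1 : U + d ≤ μ * (X - Z)) (h2 : U ≤ μ * Z) (h3 : X ≤ μ * U) (h4 : U ≤ μ ^ j * d) :
    0 ≤ μ ^ q - 2 * μ ^ (q - 2) - 1 := by
  have h5 : d ≤ (μ ^ 2 - 2) * U := by nlinarith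
  have h6 : 0 < μ ^ 2 - 2 := by
    by_contra h
    push Not at h
    nlinarith
  have h7 : 1 ≤ μ := by nlinarith
  have h8 : μ ^ j ≤ μ ^ (q - 2) := pow_le_pow_right₀ h7 hj
  have h9 : d ≤ (μ ^ 2 - 2) * (μ ^ (q-2) * d) :=
    h5.trans (mul_le_mul_of_nonneg_left (h4.trans (mul_le_mul_of_nonneg_right h8 hd.le)) h6.le)
  have h10 : 1 ≤ (μ ^ 2 - 2) * μ ^ (q-2) := by
    by_contra h
    push Not at h
    nlinarith
  have h11 : μ ^ q = μ ^ 2 * μ ^ (q - 2) := by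
    rw [← pow_add]; congr 1; omega
  rw [h11]; linarith

lemma L2core (P : Finset ℝ) (g : ℝ → ℝ) (q : ℕ) (μ : ℝ) (hμ : 0 < μ) (hq : 3 ≤ q) (hodd : Odd q)
    (hcard : P.card = q) (hmap : ∀ x ∈ P, g x ∈ P)
    (hcyc : ∀ x ∈ P, ∀ y ∈ P, ∃ j < q, g^[j] x = y)
    (hlip : ∀ x ∈ P, ∀ y ∈ P, |g x - g y| ≤ μ * |x - y|) :
    0 ≤ μ ^ q - 2 * μ ^ (q - 2) - 1 := by
  classical
  have hnofix : ∀ x ∈ P, g x ≠ x := by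
    intro x hx hfx
    have : P ⊆ {x} := by
      intro y hy
      obtain ⟨j, -, hj⟩ := hcyc x hx y hy
      rw [Function.iterate_fixed hfx] at hj
      simp [hj]
    have := Finset.card_le_card this
    simp at this; omega
  have hsurj : ∀ y ∈ P, ∃ x ∈ P, g x = y := by
    intro y hy
    obtain ⟨j, -, hj⟩ := hcyc _ (hmap y hy) y hy
    refine ⟨g^[j] y, ?_, ?_⟩
    · have : ∀ j, g^[j] y ∈ P := by
        intro j
        induction j with
        | zero => exact hy
        | succ k ih => rw [Function.iterate_succ_apply']; exact hmap _ ih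
      exact this j
    · rw [← Function.iterate_succ_apply' g, Function.iterate_succ_apply]; exact hj
  have hinj : Set.InjOn g P := by
    apply Finset.injOn_of_surjOn_of_card_le g (t := P)
    · intro x hx; exact hmap x hx
    · intro y hy
      obtain ⟨x, hx, h⟩ := hsurj y hy
      exact ⟨x, hx, h⟩
    · rfl
  have hPne : P.Nonempty := by rw [← Finset.card_pos]; omega
  -- a
  have hup : (P.filter (fun x => x < g x)).Nonempty := by
    refine ⟨P.min' hPne, ?_⟩
    rw [Finset.mem_filter]
    refine ⟨P.min'_mem hPne, lt_of_le_of_ne (P.min'_le _ (hmap _ (P.min'_mem hPne))) (hnofix _ (P.min'_mem hPne)).symm⟩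
  obtain ⟨a, haP, hag, hamax⟩ : ∃ a ∈ P, a < g a ∧ ∀ x ∈ P, x < g x → x ≤ a := by
    refine ⟨_, (Finset.mem_filter.1 (Finset.max'_mem _ hup)).1, (Finset.mem_filter.1 (Finset.max'_mem _ hup)).2, ?_⟩
    intro x hx hgx
    exact Finset.le_max' _ _ (Finset.mem_filter.2 ⟨hx, hgx⟩)
  have hne2 : (P.filter (fun x => a < x)).Nonempty := ⟨g a, Finset.mem_filter.2 ⟨hmap a haP, hag⟩⟩
  obtain ⟨b, hbP, hab, hbmin⟩ : ∃ b ∈ P, a < b ∧ ∀ x ∈ P, a < x → b ≤ x := by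
    refine ⟨_, (Finset.mem_filter.1 (Finset.min'_mem _ hne2)).1, (Finset.mem_filter.1 (Finset.min'_mem _ hne2)).2, ?_⟩
    intro x hx hgx
    exact Finset.min'_le _ _ (Finset.mem_filter.2 ⟨hx, hgx⟩)
  have hdich : ∀ x ∈ P, x ≤ a ∨ b ≤ x := by
    intro x hx
    rcases le_or_gt x a with h | h
    · exact Or.inl h
    · exact Or.inr (hbmin x hx h)
  have hga : b ≤ g a := hbmin _ (hmap a haP) hag
  have hgb : g b ≤ a := by
    rcases hdich _ (hmap b hbP) with h | h
    · exact h
    · exfalso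
      have := hamax b hbP (lt_of_le_of_ne h (hnofix b hbP).symm)
      linarith
  -- c
  obtain ⟨c, hac, hcb, hgca, hgcb⟩ : ∃ c, a < c ∧ c < b ∧ g a - c ≤ μ * (c - a) ∧ c - g b ≤ μ * (b - c) := by
    have h1 := hlip a haP b hbP
    rw [abs_of_nonneg (by linarith), abs_sub_comm, abs_of_nonneg (by linarith)] at h1
    have h0 : (0:ℝ) < 1 + μ := by linarith
    refine ⟨(g a + μ * a) / (1 + μ), ?_, ?_, ?_, ?_⟩
    · rw [lt_div_iff₀ h0]; nlinarith
    · rw [div_lt_iff₀ h0]; nlinarith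
    · apply le_of_eq; field_simp; ring
    · have : (g a + μ * a) / (1 + μ) * (1 + μ) = g a + μ * a := by field_simp
      nlinarith
  have hc : ∀ x ∈ P, |g x - c| ≤ μ * |x - c| := by
    intro x hx
    rcases hdich x hx with h | h
    · have h1 := hlip x hx a haP
      rw [abs_of_nonpos (by linarith : x - c ≤ 0)]
      rw [abs_of_nonpos (by linarith : x - a ≤ 0)] at h1
      rw [abs_le] at h1 ⊢
      have h2 := hlip x hx b hbP
      rw [abs_of_nonpos (by linarith : x - b ≤ 0), abs_le] at h2
      constructor
      · nlinarith
      · nlinarith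
    · have h1 := hlip x hx b hbP
      rw [abs_of_nonneg (by linarith : 0 ≤ x - c)]
      rw [abs_of_nonneg (by linarith : 0 ≤ x - b)] at h1
      rw [abs_le] at h1 ⊢
      constructor
      · nlinarith
      · nlinarith
  have hit : ∀ j, ∀ x ∈ P, g^[j] x ∈ P ∧ |g^[j] x - c| ≤ μ ^ j * |x - c| := by
    intro j
    induction j with
    | zero => intro x hx; simp [hx]
    | succ k ih =>
      intro x hx
      obtain ⟨h1, h2⟩ := ih x hx
      rw [Function.iterate_succ_apply']
      refine ⟨hmap _ h1, (hc _ h1).trans ?_⟩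
      calc μ * |g^[k] x - c| ≤ μ * (μ ^ k * |x - c|) := by gcongr
        _ = _ := by ring
  have hreach : ∀ x ∈ P, ∀ u ∈ P, u ≠ x → ∃ j ≤ q - 2, |u - c| ≤ μ ^ j * |g x - c| := by
    intro x hx u hu hne
    obtain ⟨j, hj, h⟩ := hcyc x hx u hu
    rcases j with _ | j
    · exact absurd h.symm hne
    · rw [Function.iterate_succ_apply] at h
      refine ⟨j, by omega, ?_⟩
      rw [← h]
      exact (hit j _ (hmap x hx)).2
  -- invariant
  let sw : ℝ → Prop := fun x => (x ≤ a → b ≤ g x) ∧ (b ≤ x → g x ≤ a)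
  let Inv : ℝ × ℝ → Prop := fun st => st.1 ≤ a ∧ b ≤ st.2 ∧ (∀ x ∈ P, st.1 ≤ x → x ≤ st.2 → sw x) ∧
    (∃ z ∈ P, b ≤ z ∧ z ≤ st.2 ∧ g z ≤ st.1) ∧ (∃ w ∈ P, st.1 ≤ w ∧ w ≤ a ∧ st.2 ≤ g w)
  have hI0 : Inv (a, b) := by
    refine ⟨le_rfl, le_rfl, ?_, ⟨b, hbP, le_rfl, le_rfl, hgb⟩, ⟨a, haP, le_rfl, le_rfl, hga⟩⟩
    intro x hx h1 h2
    simp only at h1 h2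
    rcases hdich x hx with h | h
    · have : x = a := le_antisymm h h1
      subst this
      exact ⟨fun _ => hga, fun h => by linarith⟩
    · have : x = b := le_antisymm h2 h
      subst this
      exact ⟨fun h => by linarith, fun _ => hgb⟩
  have hne3 : ((P ×ˢ P).filter Inv).Nonempty := ⟨(a, b), by simp [haP, hbP, hI0]⟩
  obtain ⟨⟨s, t⟩, hst, hmax⟩ := Finset.exists_max_image _ (fun st : ℝ × ℝ => st.2 - st.1) hne3
  rw [Finset.mem_filter, Finset.mem_product] at hst
  obtain ⟨⟨hsP, htP⟩, hsa, hbt, hsw, ⟨z, hzP, hbz, hzt, hgz⟩, ⟨w, hwP, hsw', hwa, hgw⟩⟩ := hst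
  simp only at hsP htP hsa hbt hsw hzt hgz hsw' hgw
  have hne4 : (P.filter (fun x => s ≤ x ∧ x ≤ t)).Nonempty := ⟨a, by simp [haP]; constructor <;> linarith⟩
  obtain ⟨z', hz', hzmin⟩ := Finset.exists_min_image _ g hne4
  obtain ⟨w', hw', hwmax⟩ := Finset.exists_max_image _ g hne4
  simp only [Finset.mem_filter] at hz' hw' hzmin hwmax
  obtain ⟨hz'P, hsz', hz't⟩ := hz'
  obtain ⟨hw'P, hsw'', hw't⟩ := hw'
  have hs's : g z' ≤ s := (hzmin z ⟨hzP, by linarith, hzt⟩).trans hgz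
  have ht't : t ≤ g w' := hgw.trans (hwmax w ⟨hwP, hsw', by linarith⟩)
  have hbz' : b ≤ z' := by
    rcases hdich z' hz'P with h | h
    · have := (hsw z' hz'P hsz' hz't).1 h; linarith
    · exact h
  have hwa' : w' ≤ a := by
    rcases hdich w' hw'P with h | h
    · exact h
    · have := (hsw w' hw'P hsw'' hw't).2 h; linarith
  by_cases hall : ∀ x ∈ P, g z' ≤ x → x ≤ g w' → sw x
  · exfalso
    have hI : Inv (g z', g w') := by
      refine ⟨by simp only; linarith, by simp only; linarith, hall, ⟨z', hz'P, hbz', by simp only; linarith, le_rfl⟩,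
        ⟨w', hw'P, by simp only; linarith, hwa', le_rfl⟩⟩
    have hm := hmax (g z', g w') (by simp [hmap _ hz'P, hmap _ hw'P, hI])
    simp only at hm
    have e1 : g z' = s := by linarith
    have e2 : g w' = t := by linarith
    have hinv : ∀ j, s ≤ g^[j] a ∧ g^[j] a ≤ t := by
      intro j
      induction j with
      | zero => exact ⟨hsa, by simp; linarith⟩
      | succ k ih =>
        rw [Function.iterate_succ_apply']
        have hm := (hit k a haP).1
        exact ⟨e1 ▸ hzmin _ ⟨hm, ih⟩, e2 ▸ hwmax _ ⟨hm, ih⟩⟩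
    have hallsw : ∀ x ∈ P, sw x := by
      intro x hx
      obtain ⟨j, -, hj⟩ := hcyc a haP x hx
      have := hinv j
      rw [hj] at this
      exact hsw x hx this.1 this.2
    have c1 : (P.filter (fun x => x ≤ a)).card ≤ (P.filter (fun x => ¬ x ≤ a)).card := by
      apply Finset.card_le_card_of_injOn g
      · intro x hx
        simp only [Finset.coe_filter, Set.mem_ofPred_eq] at hx ⊢
        refine ⟨hmap x hx.1, ?_⟩
        have := (hallsw x hx.1).1 hx.2
        intro h; linarith
      · exact hinj.mono (by intro x hx; simp at hx; exact hx.1)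
    have c2 : (P.filter (fun x => ¬ x ≤ a)).card ≤ (P.filter (fun x => x ≤ a)).card := by
      apply Finset.card_le_card_of_injOn g
      · intro x hx
        simp only [Finset.coe_filter, Set.mem_ofPred_eq] at hx ⊢
        refine ⟨hmap x hx.1, ?_⟩
        exact (hallsw x hx.1).2 ((hdich x hx.1).resolve_left hx.2)
      · exact hinj.mono (by intro x hx; simp at hx; exact hx.1)
    have c3 := Finset.card_filter_add_card_filter_not (s := P) (fun x => x ≤ a)
    rw [hcard] at c3
    obtain ⟨k, hk⟩ := hodd
    omega
  · push Not at hall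
    obtain ⟨x, hxP, hx1, hx2, hxsw⟩ := hall
    rcases hdich x hxP with hxa | hbx
    · -- left case
      have hgx : g x ≤ a := by
        by_contra h
        exact hxsw ⟨fun _ => (hdich _ (hmap x hxP)).resolve_left h, fun h => by linarith⟩
      have hxs : x < s := by
        by_contra h
        push Not at h
        exact hxsw (hsw x hxP h (by linarith))
      obtain ⟨j, hj, hjr⟩ := hreach x hxP z' hz'P (by rintro rfl; linarith)
      rw [abs_of_nonneg (by linarith), abs_of_nonpos (by linarith : g x - c ≤ 0)] at hjr
      have k1 := hlip w hwP x hxP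
      rw [abs_of_nonneg (by linarith), abs_of_nonneg (by linarith : 0 ≤ w - x)] at k1
      have k2 := hc w hwP
      rw [abs_of_nonneg (by linarith), abs_of_nonpos (by linarith : w - c ≤ 0)] at k2
      have k3 := hc z' hz'P
      rw [abs_of_nonpos (by linarith), abs_of_nonneg (by linarith : 0 ≤ z' - c)] at k3
      apply fin_ineq (X := c - x) (Z := c - w) (U := z' - c) (d := c - g x) hq hj hμ (by linarith) (by linarith)
      · have : μ * (c - x - (c - w)) = μ * (w - x) := by ring
        linarith
      · have : μ * (c - w) = μ * (-(w - c)) := by ring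
        linarith
      · linarith
      · have : μ ^ j * (c - g x) = μ ^ j * (-(g x - c)) := by ring
        linarith
    · have hgx : b ≤ g x := by
        by_contra h
        exact hxsw ⟨fun h => by linarith, fun _ => (hdich _ (hmap x hxP)).resolve_right h⟩
      have hxs : t < x := by
        by_contra h
        push Not at h
        exact hxsw (hsw x hxP (by linarith) h)
      obtain ⟨j, hj, hjr⟩ := hreach x hxP w' hw'P (by rintro rfl; linarith)
      rw [abs_of_nonpos (by linarith), abs_of_nonneg (by linarith : 0 ≤ g x - c)] at hjr
      have k1 := hlip x hxP z hzP
      rw [abs_of_nonneg (by linarith), abs_of_nonneg (by linarith : 0 ≤ x - z)] at k1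
      have k2 := hc z hzP
      rw [abs_of_nonpos (by linarith), abs_of_nonneg (by linarith : 0 ≤ z - c)] at k2
      have k3 := hc w' hw'P
      rw [abs_of_nonneg (by linarith), abs_of_nonpos (by linarith : w' - c ≤ 0)] at k3
      apply fin_ineq (X := x - c) (Z := z - c) (U := c - w') (d := g x - c) hq hj hμ (by linarith) (by linarith)
      · have : μ * (x - c - (z - c)) = μ * (x - z) := by ring
        linarith
      · linarith
      · have : μ * (c - w') = μ * (-(w' - c)) := by ring
        linarith
      · linarith

lemma L2 (p : ℕ → ℝ) (q : ℕ) (μ : ℝ) (hμ : 0 < μ) (hq : 3 ≤ q) (hodd : Odd q)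
    (hper : ∀ i, p (i + q) = p i) (hinj : ∀ i < q, ∀ j < q, p i = p j → i = j)
    (hlip : ∀ i j, |p (i+1) - p (j+1)| ≤ μ * |p i - p j|) :
    0 ≤ μ ^ q - 2 * μ ^ (q - 2) - 1 := by
  classical
  have hmod : ∀ i, p (i % q) = p i := by
    intro i
    have : ∀ k, p (i % q + k * q) = p (i % q) := by
      intro k
      induction k with
      | zero => simp
      | succ k ih => rw [← ih, ← hper (i % q + k * q)]; congr 1; ring
    rw [← this (i / q)]
    congr 1
    rw [mul_comm]; exact Nat.mod_add_div i q
  have hg : ∃ g : ℝ → ℝ, ∀ i, g (p i) = p (i + 1) := by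
    let g : ℝ → ℝ := fun x => if h : ∃ i, p i = x then p (h.choose + 1) else 0
    refine ⟨g, fun i => ?_⟩
    have h : ∃ j, p j = p i := ⟨i, rfl⟩
    have h1 : g (p i) = p (h.choose + 1) := dif_pos h
    rw [h1]
    have h2 := hlip h.choose i
    rw [h.choose_spec, sub_self, abs_zero, mul_zero] at h2
    have := abs_nonpos_iff.1 h2
    linarith
  obtain ⟨g, hg⟩ := hg
  have hgit : ∀ j i, g^[j] (p i) = p (i + j) := by
    intro j
    induction j with
    | zero => intro i; rfl
    | succ k ih => intro i; rw [Function.iterate_succ_apply, hg, ih]; congr 1; ring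
  apply L2core ((Finset.range q).image p) g q μ hμ hq hodd
  · rw [Finset.card_image_of_injOn, Finset.card_range]
    intro i hi j hj h
    simp only [Finset.coe_range, Set.mem_Iio] at hi hj
    exact hinj i hi j hj h
  · intro x hx
    rw [Finset.mem_image] at hx
    obtain ⟨i, hi, rfl⟩ := hx
    rw [hg, ← hmod]
    exact Finset.mem_image_of_mem _ (Finset.mem_range.2 (Nat.mod_lt _ (by omega)))
  · intro x hx y hy
    rw [Finset.mem_image] at hx hy
    obtain ⟨i, hi, rfl⟩ := hx
    obtain ⟨j, hj, rfl⟩ := hy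
    rw [Finset.mem_range] at hi hj
    rcases le_or_gt i j with h | h
    · exact ⟨j - i, by omega, by rw [hgit]; congr 1; omega⟩
    · refine ⟨j + q - i, by omega, ?_⟩
      rw [hgit, ← hper j]; congr 1; omega
  · intro x hx y hy
    rw [Finset.mem_image] at hx hy
    obtain ⟨i, hi, rfl⟩ := hx
    obtain ⟨j, hj, rfl⟩ := hy
    rw [hg, hg]
    exact hlip i j

lemma poly_lt {q : ℕ} (hq : 3 ≤ q) {μ lam : ℝ} (hμ : 0 < μ) (hlt : μ < lam)
    (h : 0 ≤ μ ^ q - 2 * μ ^ (q - 2) - 1) (hl : lam ^ q - 2 * lam ^ (q - 2) - 1 = 0) : False := by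
  have e : ∀ x : ℝ, x ^ q = x ^ 2 * x ^ (q - 2) := by
    intro x; rw [← pow_add]; congr 1; omega
  rw [e] at h hl
  have h1 : 0 < μ ^ (q-2) := by positivity
  have h2 : μ ^ (q-2) < lam ^ (q-2) := pow_lt_pow_left₀ hlt hμ.le (by omega)
  have h3 : 0 < μ ^ 2 - 2 := by
    by_contra hh
    push Not at hh
    nlinarith
  have h4 : μ ^ 2 < lam ^ 2 := by nlinarith
  have h5 : (μ ^ 2 - 2) * μ ^ (q-2) < (lam^2 - 2) * lam ^ (q-2) :=
    mul_lt_mul (by linarith) h2.le h1 (by linarith)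
  linarith

lemma lam_gt_one {q : ℕ} (hq : 3 ≤ q) {lam : ℝ}
    (hmax : ∀ y : ℝ, y ^ q - 2 * y ^ (q - 2) - 1 = 0 → y ≤ lam) : 1 < lam := by
  have hc : ContinuousOn (fun y : ℝ => y ^ q - 2 * y ^ (q - 2) - 1) (Set.Icc 1 2) := by fun_prop
  have h2 : (0:ℝ) ≤ 2 ^ q - 2 * 2 ^ (q - 2) - 1 := by
    have : (2:ℝ) ^ q = 2 ^ 2 * 2 ^ (q-2) := by rw [← pow_add]; congr 1; omega
    rw [this]
    have : (1:ℝ) ≤ 2 ^ (q-2) := one_le_pow₀ (by norm_num)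
    linarith
  obtain ⟨y, hy, h0⟩ := intermediate_value_Icc (by norm_num : (1:ℝ) ≤ 2) hc
    (show (0:ℝ) ∈ Set.Icc _ _ from ⟨by norm_num, h2⟩)
  have := hmax y h0
  have h1 : y ≠ 1 := by rintro rfl; norm_num at h0
  have := lt_of_le_of_ne hy.1 h1.symm
  linarith


lemma L3 {n : ℕ} (A : Fin n → Fin n → ℝ) (hA : ∀ i j, 0 ≤ A i j) (μ : ℝ) (hμ : 0 < μ) :
    (∃ v : Fin n → ℝ, (∀ i, 0 < v i) ∧ ∀ i, ∑ j, A i j * v j ≤ μ * v i) ∨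
    (∃ u : Fin n → ℝ, (∀ i, 0 ≤ u i) ∧ (∃ i, 0 < u i) ∧ ∀ i, μ * u i ≤ ∑ j, A i j * u j) := by
  let T : (Fin n → ℝ) → (Fin n → ℝ) := fun v i => 1 + μ⁻¹ * ∑ j, A i j * v j
  let S : ℕ → Fin n → ℝ := fun m => T^[m] (fun _ => 1)
  have hS0 : ∀ i, S 0 i = 1 := fun _ => rfl
  have hS1 : ∀ m i, S (m+1) i = 1 + μ⁻¹ * ∑ j, A i j * S m j := by
    intro m i
    show T^[m+1] _ i = _
    rw [Function.iterate_succ_apply']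
  have hge : ∀ m i, 1 ≤ S m i := by
    intro m
    induction m with
    | zero => intro i; rw [hS0]
    | succ m ih =>
      intro i
      rw [hS1]
      have : 0 ≤ ∑ j, A i j * S m j := Finset.sum_nonneg (fun j _ => mul_nonneg (hA i j) (by linarith [ih j]))
      have : 0 ≤ μ⁻¹ * ∑ j, A i j * S m j := by positivity
      linarith
  have hmono : ∀ m i, S m i ≤ S (m+1) i := by
    intro m
    induction m with
    | zero => intro i; rw [hS0]; exact hge 1 i
    | succ m ih =>
      intro i
      rw [hS1, hS1]
      gcongr with j
      · exact hA i j
      · exact ih j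
  by_cases hb : ∃ K, ∀ m i, S m i ≤ K
  · left
    obtain ⟨K, hK⟩ := hb
    have hlim : ∀ i, ∃ l, Filter.Tendsto (fun m => S m i) Filter.atTop (nhds l) := fun i =>
      ⟨_, tendsto_atTop_ciSup (monotone_nat_of_le_succ (fun m => hmono m i)) ⟨K, by rintro _ ⟨m, rfl⟩; exact hK m i⟩⟩
    choose v hv using hlim
    have hv1 : ∀ i, 1 ≤ v i := fun i => ge_of_tendsto' (hv i) (fun m => hge m i)
    refine ⟨v, fun i => by linarith [hv1 i], fun i => ?_⟩
    have h1 : Filter.Tendsto (fun m => S (m+1) i) Filter.atTop (nhds (1 + μ⁻¹ * ∑ j, A i j * v j)) := by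
      simp_rw [hS1]
      refine Filter.Tendsto.const_add _ (Filter.Tendsto.const_mul _ ?_)
      exact tendsto_finsetSum _ (fun j _ => (hv j).const_mul _)
    have h2 := tendsto_nhds_unique h1 ((Filter.tendsto_add_atTop_iff_nat 1).2 (hv i))
    have h3 : μ⁻¹ * ∑ j, A i j * v j ≤ v i := by linarith
    rwa [inv_mul_le_iff₀ hμ] at h3
  · right
    push Not at hb
    let N : ℕ → ℝ := fun m => ∑ i, S m i
    have hle : ∀ m i, S m i ≤ N m := fun m i =>
      Finset.single_le_sum (f := fun i => S m i) (fun j _ => by linarith [hge m j]) (Finset.mem_univ i)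
    have hn : Nonempty (Fin n) := by
      obtain ⟨m, i, -⟩ := hb 0; exact ⟨i⟩
    obtain ⟨i0⟩ := hn
    have hNpos : ∀ m, 0 < N m := fun m => lt_of_lt_of_le (by linarith [hge m i0]) (hle m i0)
    have hNmono : Monotone N := monotone_nat_of_le_succ (fun m => Finset.sum_le_sum (fun i _ => hmono m i))
    have hNtop : Filter.Tendsto N Filter.atTop Filter.atTop := by
      apply Filter.tendsto_atTop_atTop_of_monotone hNmono
      intro K
      obtain ⟨m, i, h⟩ := hb K
      exact ⟨m, h.le.trans (hle m i)⟩
    let U : ℕ → Fin n → ℝ := fun m i => S m i / N m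
    have hU : ∀ m, U m ∈ stdSimplex ℝ (Fin n) := by
      intro m
      refine ⟨fun i => div_nonneg (by linarith [hge m i]) (hNpos m).le, ?_⟩
      show ∑ i, S m i / N m = 1
      rw [← Finset.sum_div]
      exact div_self (hNpos m).ne'
    obtain ⟨u, hu, φ, hφ, hlim⟩ := (isCompact_stdSimplex ℝ (Fin n)).tendsto_subseq hU
    have hlimi : ∀ i, Filter.Tendsto (fun m => U (φ m) i) Filter.atTop (nhds (u i)) := fun i =>
      (tendsto_pi_nhds.1 hlim) i
    refine ⟨u, hu.1, ?_, fun i => ?_⟩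
    · by_contra h
      push Not at h
      have : ∑ i, u i ≤ 0 := Finset.sum_nonpos (fun i _ => h i)
      rw [hu.2] at this
      linarith
    · have h1 : ∀ m, μ * U m i - μ * (N m)⁻¹ ≤ ∑ j, A i j * U m j := by
        intro m
        have h2 : S m i ≤ 1 + μ⁻¹ * ∑ j, A i j * S m j := by rw [← hS1]; exact hmono m i
        have h3 : ∑ j, A i j * U m j = (∑ j, A i j * S m j) / N m := by
          rw [Finset.sum_div]; exact Finset.sum_congr rfl (fun j _ => by simp only [U]; ring)
        rw [h3, le_div_iff₀ (hNpos m)]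
        have h4 : (μ * U m i - μ * (N m)⁻¹) * N m = μ * (S m i - 1) := by
          have := (hNpos m).ne'
          simp only [U]; field_simp
        rw [h4]
        have h5 : S m i - 1 ≤ μ⁻¹ * ∑ j, A i j * S m j := by linarith
        rwa [le_inv_mul_iff₀ hμ] at h5
      have l1 : Filter.Tendsto (fun m => μ * U (φ m) i - μ * (N (φ m))⁻¹) Filter.atTop (nhds (μ * u i - μ * 0)) := by
        refine ((hlimi i).const_mul μ).sub (Filter.Tendsto.const_mul μ ?_)
        exact (tendsto_inv_atTop_zero.comp hNtop).comp hφ.tendsto_atTop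
      have l2 : Filter.Tendsto (fun m => ∑ j, A i j * U (φ m) j) Filter.atTop (nhds (∑ j, A i j * u j)) :=
        tendsto_finsetSum _ (fun j _ => (hlimi j).const_mul _)
      have := le_of_tendsto_of_tendsto' l1 l2 (fun m => h1 (φ m))
      simpa using this


lemma phi_aux (n : ℕ) (v : Fin n → ℝ) (hv : ∀ i, 0 ≤ v i) : ∃ φ : ℕ → ℝ, Monotone φ ∧ φ 0 = 0 ∧
    (∀ k (h : k < n), φ (k+1) - φ k = v ⟨k, h⟩) ∧
    ∀ m m', m ≤ n → m' ≤ n → |φ m' - φ m| = ∑ j : Fin n, (if min m m' ≤ (j:ℕ) ∧ (j:ℕ) < max m m' then 1 else 0) * v j := by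
  let e : ℕ → ℝ := fun l => if h : l < n then v ⟨l, h⟩ else 0
  have he : ∀ l, 0 ≤ e l := by
    intro l; simp only [e]; split_ifs
    · exact hv _
    · exact le_rfl
  have hev : ∀ j : Fin n, v j = e j := by
    intro j; simp [e]
  let φ : ℕ → ℝ := fun k => ∑ l ∈ Finset.range k, e l
  have hmono : Monotone φ := monotone_nat_of_le_succ (fun k => by
    simp only [φ]; rw [Finset.sum_range_succ]; linarith [he k])
  have key : ∀ m m', m ≤ m' → m' ≤ n → φ m' - φ m = ∑ j : Fin n, (if m ≤ (j:ℕ) ∧ (j:ℕ) < m' then 1 else 0) * v j := by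
    intro m m' h1 h2
    have : ∑ j : Fin n, (if m ≤ (j:ℕ) ∧ (j:ℕ) < m' then (1:ℝ) else 0) * v j
      = ∑ l ∈ Finset.range n, (if m ≤ l ∧ l < m' then (1:ℝ) else 0) * e l := by
      rw [← Fin.sum_univ_eq_sum_range (fun l => (if m ≤ l ∧ l < m' then (1:ℝ) else 0) * e l)]
      exact Finset.sum_congr rfl (fun j _ => by rw [hev])
    rw [this]
    simp only [φ]
    rw [← Finset.sum_Ico_eq_sub _ h1]
    simp only [ite_mul, one_mul, zero_mul]
    rw [← Finset.sum_filter]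
    apply Finset.sum_congr _ (fun _ _ => rfl)
    ext l; simp; omega
  refine ⟨φ, hmono, by simp [φ], ?_, ?_⟩
  · intro k h
    simp only [φ]; rw [Finset.sum_range_succ]; simp [e, h]
  · intro m m' h1 h2
    rcases le_total m m' with h | h
    · rw [min_eq_left h, max_eq_right h, ← key m m' h h2, abs_of_nonneg (by linarith [hmono h])]
    · rw [min_eq_right h, max_eq_left h, ← key m' m h h1, abs_of_nonpos (by linarith [hmono h])]; ring

lemma exists_phi (q : ℕ) (hq : 3 ≤ q) (hodd : Odd q) (lam μ : ℝ) (hμ : 0 < μ) (hlt : μ < lam)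
    (hl : lam ^ q - 2 * lam ^ (q - 2) - 1 = 0)
    (r τ : ℕ → ℕ) (hr : ∀ i, r i < q) (hper : ∀ i, r (i + q) = r i)
    (hinj : ∀ i < q, ∀ j < q, r i = r j → i = j) (hτ : ∀ i, τ (r i) = r (i+1)) (hτlt : ∀ k, τ k < q) :
    ∃ φ : ℕ → ℝ, Monotone φ ∧ φ 0 < φ (q-1) ∧ ∀ k, k + 1 < q → μ * |φ (k+1) - φ k| ≤ |φ (τ (k+1)) - φ (τ k)| := by
  rcases L3 (n := q - 1) (fun k j => if min (τ k) (τ (k+1)) ≤ (j:ℕ) ∧ (j:ℕ) < max (τ k) (τ (k+1)) then 1 else 0)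
    (by intro i j; split_ifs <;> norm_num) μ hμ with ⟨v, hv, hle⟩ | ⟨u, hu, ⟨i0, hi0⟩, hge⟩
  · exfalso
    obtain ⟨φ, hmono, h0, hs, habs⟩ := phi_aux (q-1) v (fun i => (hv i).le)
    have h1 : ∀ k, k + 1 < q → |φ (τ (k+1)) - φ (τ k)| ≤ μ * (φ (k+1) - φ k) := by
      intro k hk
      rw [hs k (by omega), habs _ _ (by have := hτlt k; omega) (by have := hτlt (k+1); omega)]
      exact hle ⟨k, by omega⟩
    have h2 : ∀ a d, a + d < q → |φ (τ (a+d)) - φ (τ a)| ≤ μ * (φ (a+d) - φ a) := by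
      intro a d
      induction d with
      | zero => intro _; simp
      | succ d ih =>
        intro hd
        have e1 := ih (by omega)
        have e2 := h1 (a+d) (by omega)
        rw [abs_le] at *
        rw [show a + (d+1) = a + d + 1 by ring]
        constructor <;> linarith
    have hstr : ∀ a b, a < b → b < q → φ a < φ b := by
      intro a b h hb
      have e1 := hs a (by omega)
      have e2 := hv ⟨a, by omega⟩
      have e3 := hmono (show a + 1 ≤ b by omega)
      linarith
    refine poly_lt hq hμ hlt (L2 (fun i => φ (r i)) q μ hμ hq hodd ?_ ?_ ?_) hl
    · intro i; simp only [hper]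
    · intro i hi j hj h
      apply hinj i hi j hj
      rcases lt_trichotomy (r i) (r j) with h' | h' | h'
      · exact absurd h (hstr _ _ h' (hr j)).ne
      · exact h'
      · exact absurd h (hstr _ _ h' (hr i)).ne'
    · intro i j
      simp only [← hτ]
      have hi := hr i
      have hj := hr j
      generalize r i = a at *
      generalize r j = b at *
      rcases le_total a b with h | h
      · obtain ⟨d, rfl⟩ := Nat.exists_eq_add_of_le h
        have := h2 a d (by omega)
        rw [abs_sub_comm, abs_sub_comm (φ a), abs_of_nonneg (by linarith [hmono h] : 0 ≤ φ (a+d) - φ a)]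
        exact this
      · obtain ⟨d, rfl⟩ := Nat.exists_eq_add_of_le h
        have := h2 b d (by omega)
        rw [abs_of_nonneg (by linarith [hmono h] : 0 ≤ φ (b+d) - φ b)]
        exact this
  · obtain ⟨φ, hmono, h0, hs, habs⟩ := phi_aux (q-1) u hu
    refine ⟨φ, hmono, ?_, ?_⟩
    · have e1 := hs i0 i0.2
      have e2 : φ 0 ≤ φ i0 := hmono (by omega)
      have e3 : φ (i0 + 1) ≤ φ (q-1) := hmono (by have := i0.2; omega)
      simp only [Fin.eta] at e1
      linarith
    · intro k hk
      rw [abs_of_nonneg (by linarith [hmono (show k ≤ k+1 by omega)]), hs k (by omega),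
        habs _ _ (by have := hτlt k; omega) (by have := hτlt (k+1); omega)]
      exact hge ⟨k, by omega⟩


structure LSys (q : ℕ) where
  f : ℕ → ℝ → ℝ
  hf : ∀ t, Continuous (f t)
  C : ℕ → ℕ → Set ℝ
  τ : ℕ → ℕ
  hτ : ∀ k, τ k < q
  ne : ∀ t k, k < q → (C t k).Nonempty
  maps : ∀ t k x, k < q → x ∈ C t k → f t x ∈ C (t+1) (τ k)
  sub : ∀ t k x, k < q → x ∈ C t k → x ∈ Set.Icc (0:ℝ) 1
  δ : ℝ
  hδ : 0 < δ
  gap : ∀ t k l x y, k < l → l < q → x ∈ C t k → y ∈ C t l → x + δ ≤ y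
  φ : ℕ → ℝ
  hφ : Monotone φ
  hφ0 : φ 0 < φ (q-1)
  μ : ℝ
  hμ0 : 0 < μ
  hμ : ∀ k, k + 1 < q → μ * |φ (k+1) - φ k| ≤ |φ (τ (k+1)) - φ (τ k)|

namespace LSys
variable {q : ℕ}

def it (S : LSys q) (t : ℕ) : ℕ → ℝ → ℝ
  | 0, x => x
  | n+1, x => S.f (t+n) (it S t n x)

lemma it_add (S : LSys q) (t N k : ℕ) (x : ℝ) : S.it t (N + k) x = S.it (t+N) k (S.it t N x) := by
  induction k with
  | zero => rfl
  | succ k ih =>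
    rw [← add_assoc]
    simp only [it]
    rw [ih, add_assoc]

lemma it_cont (S : LSys q) (t n : ℕ) : Continuous (S.it t n) := by
  induction n with
  | zero => exact continuous_id
  | succ n ih => exact (S.hf (t+n)).comp ih

inductive Ch (S : LSys q) (t n : ℕ) : ℝ → ℝ → ℝ → Prop
  | nil (x : ℝ) : Ch S t n x x 0
  | cons (x y z : ℝ) (a b : ℕ) (w : ℝ) : x ≤ y → a < q → b < q → S.it t n x ∈ S.C (t+n) a →
      S.it t n y ∈ S.C (t+n) b → a ≤ b + 1 → b ≤ a + 1 → Ch S t n y z w →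
      Ch S t n x z (|S.φ a - S.φ b| + w)

lemma Ch.append {S : LSys q} {t n : ℕ} {x y z w w' : ℝ} (h : Ch S t n x y w) (h' : Ch S t n y z w') :
    Ch S t n x z (w + w') := by
  induction h with
  | nil x => simpa using h'
  | cons x y z a b w h1 h2 h3 h4 h5 h6 h7 _ ih =>
    rw [add_assoc]
    exact Ch.cons _ _ _ _ _ _ h1 h2 h3 h4 h5 h6 h7 (ih h')

lemma refine_ch (S : LSys q) (t n : ℕ) : ∀ d a b x y, a ≤ b + d → b ≤ a + d → x ≤ y → a < q → b < q →
    S.it t n x ∈ S.C (t+n) a → S.it t n y ∈ S.C (t+n) b → ∃ w, |S.φ a - S.φ b| ≤ w ∧ Ch S t n x y w := by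
  intro d
  induction d with
  | zero =>
    intro a b x y h1 h2 hxy ha hb hx hy
    exact ⟨_, by simp, Ch.cons _ _ _ a b _ hxy ha hb hx hy (by omega) (by omega) (Ch.nil y)⟩
  | succ d ih =>
    intro a b x y h1 h2 hxy ha hb hx hy
    by_cases hadj : a ≤ b + 1 ∧ b ≤ a + 1
    · exact ⟨_, by simp, Ch.cons _ _ _ a b _ hxy ha hb hx hy hadj.1 hadj.2 (Ch.nil y)⟩
    · obtain ⟨c, hc, hca, hca', hcb, hcb', hm⟩ : ∃ c < q, a ≤ c + 1 ∧ c ≤ a + 1 ∧ c ≤ b + d ∧ b ≤ c + d ∧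
          ((a < c ∧ c < b) ∨ (b < c ∧ c < a)) := by
        rcases le_total a b with h | h
        · exact ⟨a+1, by omega, by omega, by omega, by omega, by omega, by omega⟩
        · exact ⟨a-1, by omega, by omega, by omega, by omega, by omega, by omega⟩
      obtain ⟨p, hp⟩ := S.ne (t+n) c hc
      have hp' : p ∈ Set.uIcc (S.it t n x) (S.it t n y) := by
        have hδ := S.hδ
        rw [Set.mem_uIcc]
        rcases hm with ⟨m1, m2⟩ | ⟨m1, m2⟩
        · left
          have := S.gap _ _ _ _ _ m1 hc hx hp
          have := S.gap _ _ _ _ _ m2 hb hp hy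
          constructor <;> linarith
        · right
          have := S.gap _ _ _ _ _ m1 hc hy hp
          have := S.gap _ _ _ _ _ m2 ha hp hx
          constructor <;> linarith
      obtain ⟨y', hy', rfl⟩ := intermediate_value_uIcc (S.it_cont t n).continuousOn hp'
      rw [Set.uIcc_of_le hxy] at hy'
      obtain ⟨w, hw, hch⟩ := ih c b y' y hcb hcb' hy'.2 hc hb hp hy
      refine ⟨_, ?_, Ch.cons _ _ _ a c _ hy'.1 ha hc hx hp hca hca' hch⟩
      have := abs_sub_le (S.φ a) (S.φ c) (S.φ b)
      linarith

lemma hμ' (S : LSys q) (a b : ℕ) (ha : a < q) (hb : b < q) (h1 : a ≤ b + 1) (h2 : b ≤ a + 1) :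
    S.μ * |S.φ a - S.φ b| ≤ |S.φ (S.τ a) - S.φ (S.τ b)| := by
  obtain h | h | h : a = b ∨ a = b + 1 ∨ b = a + 1 := by omega
  · subst h; simp
  · subst h; exact S.hμ b ha
  · subst h; rw [abs_sub_comm, abs_sub_comm (S.φ (S.τ a))]; exact S.hμ a hb

lemma ch_succ (S : LSys q) (t n : ℕ) {x y w : ℝ} (h : Ch S t n x y w) :
    ∃ w', S.μ * w ≤ w' ∧ Ch S t (n+1) x y w' := by
  induction h with
  | nil x => exact ⟨0, by simp, Ch.nil x⟩
  | cons x y z a b w h1 h2 h3 h4 h5 h6 h7 _ ih =>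
    obtain ⟨w', hw', hch⟩ := ih
    obtain ⟨w'', hw'', hch'⟩ := refine_ch S t (n+1) q (S.τ a) (S.τ b) x y
      (by have := S.hτ a; omega) (by have := S.hτ b; omega) h1 (S.hτ a) (S.hτ b)
      (S.maps _ _ _ h2 h4) (S.maps _ _ _ h3 h5)
    refine ⟨_, ?_, hch'.append hch⟩
    have := S.hμ' a b h2 h3 h6 h7
    rw [mul_add]; linarith

lemma ch_exists (S : LSys q) (t n : ℕ) (x y : ℝ) (a b : ℕ) (hxy : x ≤ y) (ha : a < q) (hb : b < q)
    (hx : x ∈ S.C t a) (hy : y ∈ S.C t b) : ∃ w, S.μ ^ n * |S.φ a - S.φ b| ≤ w ∧ Ch S t n x y w := by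
  induction n with
  | zero =>
    obtain ⟨w, hw, h⟩ := refine_ch S t 0 q a b x y (by omega) (by omega) hxy ha hb hx hy
    exact ⟨w, by simpa using hw, h⟩
  | succ n ih =>
    obtain ⟨w, hw, h⟩ := ih
    obtain ⟨w', hw', h'⟩ := ch_succ S t n h
    refine ⟨w', le_trans ?_ hw', h'⟩
    rw [pow_succ']
    have := mul_le_mul_of_nonneg_left hw S.hμ0.le
    linarith

def Sep (S : LSys q) (η : ℝ) (t n : ℕ) (A : Finset ℝ) : Prop :=
  ∀ x ∈ A, ∀ y ∈ A, x ≠ y → ∃ k < n, η ≤ |S.it t k x - S.it t k y|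

def LL (S : LSys q) : ℝ := S.φ (q-1) - S.φ 0

def Br (S : LSys q) (η : ℝ) (N m : ℕ) : Prop := ∀ t x y a b, a < q → b < q → x ∈ S.C t a → y ∈ S.C t b →
  ∃ A : Finset ℝ, (∀ s ∈ A, s ∈ Set.uIcc x y) ∧ S.Sep η t (N*m+1) A ∧
    (S.μ ^ N / 2) ^ m * |S.φ a - S.φ b| ≤ A.card * S.LL

lemma br_chain (S : LSys q) (η : ℝ) (hη : 0 < η) (N m : ℕ)
    (hN : ∀ t x y, |x - y| < η → |S.it t N x - S.it t N y| < S.δ) (hB : S.Br η N m)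
    (t : ℕ) {x z w : ℝ} (h : Ch S t N x z w) :
    x ≤ z ∧ ∃ A₁ A₂ : Finset ℝ, (∀ s ∈ A₁, s ∈ Set.Icc x z) ∧ (∀ s ∈ A₂, s ∈ Set.Icc (x+η) z) ∧
      S.Sep η t (N*(m+1)+1) A₁ ∧ S.Sep η t (N*(m+1)+1) A₂ ∧
      (S.μ ^ N / 2) ^ m * w ≤ ((A₁.card : ℝ) + A₂.card) * S.LL := by
  classical
  induction h with
  | nil x => exact ⟨le_rfl, ∅, ∅, by simp, by simp, by simp [Sep], by simp [Sep], by simp⟩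
  | cons x y z a b w h1 h2 h3 h4 h5 h6 h7 _ ih =>
    obtain ⟨hyz, A₁, A₂, hA₁, hA₂, hs₁, hs₂, hw⟩ := ih
    refine ⟨h1.trans hyz, ?_⟩
    by_cases hab : a = b
    · refine ⟨A₁, A₂, fun s hs => ⟨h1.trans (hA₁ s hs).1, (hA₁ s hs).2⟩,
        fun s hs => ⟨le_trans (by linarith) (hA₂ s hs).1, (hA₂ s hs).2⟩, hs₁, hs₂, ?_⟩
      subst hab; simpa using hw
    · have hfar : x + η ≤ y := by
        by_contra hc
        push Not at hc
        have h8 := hN t x y (by rw [abs_sub_comm, abs_of_nonneg (by linarith)]; linarith)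
        rw [abs_lt] at h8
        rcases lt_or_gt_of_ne hab with h | h
        · have := S.gap _ _ _ _ _ h h3 h4 h5
          linarith
        · have := S.gap _ _ _ _ _ h h2 h5 h4
          linarith
      obtain ⟨A, hA, hsA, hcard⟩ := hB (t+N) _ _ a b h2 h3 h4 h5
      have hpre : ∀ s ∈ A, ∃ p ∈ Set.Icc x y, S.it t N p = s := by
        intro s hs
        obtain ⟨p, hp, e⟩ := intermediate_value_uIcc (S.it_cont t N).continuousOn (hA s hs)
        rw [Set.uIcc_of_le h1] at hp
        exact ⟨p, hp, e⟩
      choose! g hg hgs using hpre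
      have hinj : Set.InjOn g A := by
        intro s hs s' hs' e
        rw [← hgs s hs, ← hgs s' hs', e]
      have hT : ∀ p ∈ A.image g, p ∈ Set.Icc x y := by
        intro p hp
        obtain ⟨s, hs, rfl⟩ := Finset.mem_image.1 hp
        exact hg s hs
      have hdisj : Disjoint (A.image g) A₂ := by
        rw [Finset.disjoint_left]
        intro p hp hp2
        have := (hT p hp).2
        have := (hA₂ p hp2).1
        linarith
      refine ⟨A.image g ∪ A₂, A₁, ?_, ?_, ?_, hs₁, ?_⟩
      · intro s hs
        rcases Finset.mem_union.1 hs with h | h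
        · exact ⟨(hT s h).1, (hT s h).2.trans hyz⟩
        · exact ⟨by have := (hA₂ s h).1; linarith, (hA₂ s h).2⟩
      · intro s hs
        exact ⟨hfar.trans (hA₁ s hs).1, (hA₁ s hs).2⟩
      · intro s hs s' hs' hne
        rcases Finset.mem_union.1 hs with h | h <;> rcases Finset.mem_union.1 hs' with h' | h'
        · obtain ⟨p, hp, rfl⟩ := Finset.mem_image.1 h
          obtain ⟨p', hp', rfl⟩ := Finset.mem_image.1 h'
          obtain ⟨k, hk, hd⟩ := hsA p hp p' hp' (fun e => hne (by rw [e]))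
          refine ⟨N + k, by rw [mul_add]; omega, ?_⟩
          rw [it_add, it_add, hgs p hp, hgs p' hp']
          exact hd
        · refine ⟨0, by omega, ?_⟩
          have := (hT s h).2
          have := (hA₂ s' h').1
          simp only [it]
          rw [abs_sub_comm, abs_of_nonneg (by linarith)]; linarith
        · refine ⟨0, by omega, ?_⟩
          have := (hT s' h').2
          have := (hA₂ s h).1
          simp only [it]
          rw [abs_of_nonneg (by linarith)]; linarith
        · exact hs₂ s h s' h' hne
      · rw [Finset.card_union_of_disjoint hdisj, Finset.card_image_of_injOn hinj]
        push_cast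
        rw [mul_add]
        linarith

lemma br_all (S : LSys q) (η : ℝ) (hη : 0 < η) (N : ℕ)
    (hN : ∀ t x y, |x - y| < η → |S.it t N x - S.it t N y| < S.δ) (m : ℕ) : S.Br η N m := by
  have hL : 0 < S.LL := by have := S.hφ0; unfold LL; linarith
  induction m with
  | zero =>
    intro t x y a b ha hb hx hy
    refine ⟨{x}, by simp, by simp [Sep], ?_⟩
    simp only [pow_zero, one_mul, Finset.card_singleton, Nat.cast_one]
    have e1 := S.hφ (Nat.zero_le a)
    have e2 := S.hφ (Nat.zero_le b)
    have e3 := S.hφ (show a ≤ q - 1 by omega)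
    have e4 := S.hφ (show b ≤ q - 1 by omega)
    unfold LL
    rw [abs_le]; constructor <;> linarith
  | succ m ih =>
    have key : ∀ t x y a b, x ≤ y → a < q → b < q → x ∈ S.C t a → y ∈ S.C t b →
        ∃ A : Finset ℝ, (∀ s ∈ A, s ∈ Set.uIcc x y) ∧ S.Sep η t (N*(m+1)+1) A ∧
        (S.μ ^ N / 2) ^ (m+1) * |S.φ a - S.φ b| ≤ A.card * S.LL := by
      intro t x y a b hxy ha hb hx hy
      obtain ⟨w, hw, hch⟩ := ch_exists S t N x y a b hxy ha hb hx hy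
      obtain ⟨-, A₁, A₂, hA₁, hA₂, hs₁, hs₂, hw2⟩ := br_chain S η hη N m hN ih t hch
      have hμ := S.hμ0
      have h1 : (S.μ ^ N / 2) ^ (m+1) * |S.φ a - S.φ b| ≤ ((A₁.card : ℝ) + A₂.card) * S.LL / 2 := by
        have h2 : (S.μ ^ N / 2) ^ m * (S.μ ^ N * |S.φ a - S.φ b|) ≤ (S.μ ^ N / 2) ^ m * w :=
          mul_le_mul_of_nonneg_left hw (by positivity)
        rw [pow_succ]
        linarith
      rcases le_total A₁.card A₂.card with h | h
      · have h' : (A₁.card : ℝ) ≤ A₂.card := by exact_mod_cast h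
        refine ⟨A₂, ?_, hs₂, ?_⟩
        · intro s hs
          rw [Set.uIcc_of_le hxy]
          exact ⟨by have := (hA₂ s hs).1; linarith, (hA₂ s hs).2⟩
        · nlinarith
      · have h' : (A₂.card : ℝ) ≤ A₁.card := by exact_mod_cast h
        refine ⟨A₁, ?_, hs₁, ?_⟩
        · intro s hs
          rw [Set.uIcc_of_le hxy]
          exact hA₁ s hs
        · nlinarith
    intro t x y a b ha hb hx hy
    rcases le_total x y with h | h
    · exact key t x y a b h ha hb hx hy
    · rw [Set.uIcc_comm, abs_sub_comm]
      exact key t y x b a h hb ha hy hx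

lemma L4 (S : LSys q) (η : ℝ) (hη : 0 < η) (N : ℕ)
    (hN : ∀ t x y, |x - y| < η → |S.it t N x - S.it t N y| < S.δ) (m : ℕ) :
    ∃ A : Finset ℝ, (∀ s ∈ A, s ∈ Set.Icc (0:ℝ) 1) ∧ S.Sep η 0 (N*m+1) A ∧ (S.μ ^ N / 2) ^ m ≤ A.card := by
  have hL : 0 < S.LL := by have := S.hφ0; unfold LL; linarith
  have hq : 0 < q := lt_of_le_of_lt (Nat.zero_le _) (S.hτ 0)
  obtain ⟨x, hx⟩ := S.ne 0 0 hq
  obtain ⟨y, hy⟩ := S.ne 0 (q-1) (by omega)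
  obtain ⟨A, hA, hs, hc⟩ := br_all S η hη N hN m 0 x y 0 (q-1) hq (by omega) hx hy
  refine ⟨A, fun s hs => ?_, hs, ?_⟩
  · exact Set.uIcc_subset_Icc (S.sub _ _ _ hq hx) (S.sub _ _ _ (by omega) hy) (hA s hs)
  · have : |S.φ 0 - S.φ (q-1)| = S.LL := by
      rw [abs_sub_comm]; exact abs_of_pos hL
    rw [this] at hc
    exact le_of_mul_le_mul_right hc hL

end LSys


lemma rank_exists (q : ℕ) (s : ℕ → ℝ) (hs : ∀ i < q, ∀ j < q, s i = s j → i = j) :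
    ∃ r tt : ℕ → ℕ, (∀ i < q, r i < q) ∧ (∀ i < q, ∀ j < q, r i < r j → s i < s j) ∧
      (∀ i < q, ∀ j < q, r i = r j → i = j) ∧
      (∀ k < q, tt k < q ∧ r (tt k) = k) ∧ (∀ i < q, tt (r i) = i) := by
  classical
  let r : ℕ → ℕ := fun i => ((Finset.range q).filter (fun j => s j < s i)).card
  have hmono : ∀ i < q, ∀ j, s i < s j → r i < r j := by
    intro i hi j hij
    apply Finset.card_lt_card
    rw [Finset.ssubset_iff_of_subset]
    · exact ⟨i, by simp [hi, hij], by simp⟩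
    · intro l hl
      simp only [Finset.mem_filter] at hl ⊢
      exact ⟨hl.1, hl.2.trans hij⟩
  have hlt : ∀ i < q, r i < q := by
    intro i hi
    have : r i < (Finset.range q).card := by
      apply Finset.card_lt_card
      rw [Finset.ssubset_iff_of_subset (Finset.filter_subset _ _)]
      exact ⟨i, by simp [hi], by simp⟩
    simpa using this
  have hinj : ∀ i < q, ∀ j < q, r i = r j → i = j := by
    intro i hi j hj h
    rcases lt_trichotomy (s i) (s j) with h' | h' | h'
    · have := hmono i hi j h'; omega
    · exact hs i hi j hj h'
    · have := hmono j hj i h'; omega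
  have hsurj : ∀ k, ∃ i, k < q → i < q ∧ r i = k := by
    intro k
    by_cases hk : k < q
    · have := Finset.surj_on_of_inj_on_of_card_le (s := Finset.range q) (t := Finset.range q) (fun i _ => r i)
        (by intro i hi; simp at hi ⊢; exact hlt i hi)
        (by intro i j hi hj h; simp at hi hj; exact hinj i hi j hj h) le_rfl k (by simpa using hk)
      obtain ⟨i, hi, h⟩ := this
      exact ⟨i, fun _ => ⟨by simpa using hi, h.symm⟩⟩
    · exact ⟨0, fun h => absurd h hk⟩
  choose tt htt using hsurj
  refine ⟨r, tt, hlt, ?_, hinj, htt, ?_⟩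
  · intro i hi j hj h
    rcases lt_trichotomy (s i) (s j) with h' | h' | h'
    · exact h'
    · have := hs i hi j hj h'; subst this; omega
    · have := hmono j hj i h'; omega
  · intro i hi
    have := htt (r i) (hlt i hi)
    exact hinj _ this.1 _ hi this.2

lemma le_MA {A : Set Cyl} {θ : S1} {x : II} (h : (θ, x) ∈ A) : (x : ℝ) ≤ MA A θ := by
  apply le_csSup
  · exact ⟨1, by rintro _ ⟨y, -, rfl⟩; exact y.2.2⟩
  · exact ⟨x, h, rfl⟩

lemma mA_le {A : Set Cyl} {θ : S1} {x : II} (h : (θ, x) ∈ A) : mA A θ ≤ (x : ℝ) := by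
  apply csInf_le
  · exact ⟨0, by rintro _ ⟨y, -, rfl⟩; exact y.2.1⟩
  · exact ⟨x, h, rfl⟩

lemma unif_gap (q : ℕ) (A : ℕ → Set Cyl) (hc : ∀ i, IsCompact (A i))
    (hd : ∀ i < q, ∀ j < q, i ≠ j → Disjoint (A i) (A j)) :
    ∃ δ : ℝ, 0 < δ ∧ ∀ i < q, ∀ j < q, i ≠ j → ∀ x ∈ A i, ∀ y ∈ A j, δ ≤ dist x y := by
  have h1 : ∀ i ∈ Finset.range q, ∀ᶠ δ in nhdsWithin (0:ℝ) (Set.Ioi 0), ∀ j ∈ Finset.range q, i ≠ j → ∀ x ∈ A i, ∀ y ∈ A j, δ ≤ dist x y := by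
    intro i hi
    rw [Finset.eventually_all]
    intro j hj
    by_cases hij : i = j
    · exact Filter.Eventually.of_forall (fun δ h => absurd hij h)
    · obtain ⟨r, hr, h⟩ := Metric.exists_pos_forall_lt_edist (hc i) (hc j).isClosed
        (hd i (Finset.mem_range.1 hi) j (Finset.mem_range.1 hj) hij)
      have : Set.Ioo (0:ℝ) r ∈ nhdsWithin (0:ℝ) (Set.Ioi 0) := Ioo_mem_nhdsGT (by exact_mod_cast hr)
      filter_upwards [this] with δ hδ _ x hx y hy
      have h2 := h x hx y hy
      rw [edist_nndist] at h2
      have h3 : (r : ℝ) < dist x y := by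
        rw [← coe_nndist]; exact_mod_cast h2
      exact (hδ.2.trans h3).le
  rw [← Finset.eventually_all] at h1
  obtain ⟨δ, h, hδ⟩ := (h1.and self_mem_nhdsWithin).exists
  exact ⟨δ, hδ, fun i hi j hj => h i (Finset.mem_range.2 hi) j (Finset.mem_range.2 hj)⟩

lemma extraction (G : Cyl → Cyl) (hG : Continuous G) (ω : S1) (hω : ∀ p, (G p).1 = p.1 + ω)
    (q : ℕ) (hq : 3 ≤ q) (hodd : Odd q) (B : Set Cyl) (hB : IsStrip B) (hper : G^[q] '' B = B)
    (hord : ∀ i j, i < j → j < q → Disjoint (G^[i] '' B) (G^[j] '' B) ∧ StripOrdered (G^[i] '' B) (G^[j] '' B))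
    (lam μ : ℝ) (hμ : 0 < μ) (hlt : μ < lam) (hl : lam ^ q - 2 * lam ^ (q - 2) - 1 = 0) :
    ∃ (S : LSys q) (θ : S1), S.μ = μ ∧ ∀ t x, S.f t x = ((G (θ + t • ω, Set.projIcc 0 1 zero_le_one x)).2 : ℝ) := by
  classical
  let A : ℕ → Set Cyl := fun i => G^[i] '' B
  have hAc : ∀ i, IsCompact (A i) := fun i => (hB.1.isCompact).image (hG.iterate i)
  have hfst : ∀ i p, (G^[i] p).1 = p.1 + i • ω := by
    intro i
    induction i with
    | zero => intro p; simp
    | succ i ih => intro p; rw [Function.iterate_succ_apply', hω, ih, succ_nsmul, add_assoc]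
  have hAne : ∀ i θ, ∃ x : II, (θ, x) ∈ A i := by
    intro i θ
    obtain ⟨x, hx⟩ := hB.2.1 (θ - i • ω)
    refine ⟨(G^[i] (θ - i • ω, x)).2, ⟨_, hx, ?_⟩⟩
    apply Prod.ext
    · rw [hfst]; simp
    · rfl
  have hdisj : ∀ i < q, ∀ j < q, i ≠ j → Disjoint (A i) (A j) := by
    intro i hi j hj hne
    rcases lt_or_gt_of_ne hne with h | h
    · exact (hord i j h hj).1
    · exact (hord j i h hi).1.symm
  have hor : ∀ i < q, ∀ j < q, i ≠ j → stripLT (A i) (A j) ∨ stripLT (A j) (A i) := by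
    intro i hi j hj hne
    rcases lt_or_gt_of_ne hne with h | h
    · exact (hord i j h hj).2
    · exact (hord j i h hi).2.symm
  obtain ⟨δ, hδ, hgap⟩ := unif_gap q A hAc hdisj
  have hres : ∀ᶠ θ in residual S1, ∀ i j : ℕ, stripLT (A i) (A j) → MA (A i) θ < mA (A j) θ := by
    rw [eventually_countable_forall]; intro i
    rw [eventually_countable_forall]; intro j
    by_cases h : stripLT (A i) (A j)
    · obtain ⟨R, hR, h'⟩ := h
      filter_upwards [hR] with θ hθ _ using h' θ hθ
    · exact Filter.Eventually.of_forall (fun _ h' => absurd h' h)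
  have hres2 : ∀ᶠ θ in residual S1, ∀ t : ℕ, ∀ i j : ℕ, stripLT (A i) (A j) →
      MA (A i) (θ + t • ω) < mA (A j) (θ + t • ω) := by
    rw [eventually_countable_forall]; intro t
    have := (Homeomorph.addRight (t • ω)).residual_map_eq
    rw [← this] at hres
    exact hres
  obtain ⟨θ, hθ⟩ := (dense_of_mem_residual hres2).nonempty
  replace hθ : ∀ t : ℕ, ∀ i j : ℕ, stripLT (A i) (A j) →
      MA (A i) (θ + t • ω) < mA (A j) (θ + t • ω) := hθ
  have hmM : ∀ i θ, mA (A i) θ ≤ MA (A i) θ := by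
    intro i θ
    obtain ⟨x, hx⟩ := hAne i θ
    exact (mA_le hx).trans (le_MA hx)
  have hs1 : ∀ i j, stripLT (A i) (A j) → mA (A i) θ < mA (A j) θ := by
    intro i j h
    have := hθ 0 i j h
    simp only [zero_smul, add_zero] at this
    exact (hmM i θ).trans_lt this
  obtain ⟨r, tt, hrlt, hrs, hrinj, htt, httr⟩ := rank_exists q (fun i => mA (A i) θ) (by
    intro i hi j hj h
    by_contra hne
    rcases hor i hi j hj hne with h' | h'
    · have := hs1 _ _ h'; exact this.ne h
    · have := hs1 _ _ h'; exact this.ne' h)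
  have hrLT : ∀ i < q, ∀ j < q, r i < r j → stripLT (A i) (A j) := by
    intro i hi j hj h
    rcases hor i hi j hj (by rintro rfl; omega) with h' | h'
    · exact h'
    · have e1 := hs1 _ _ h'
      have e2 := hrs i hi j hj h
      exact absurd e1 (not_lt.2 e2.le)
  have hq0 : 0 < q := by omega
  let τ : ℕ → ℕ := fun k => r ((tt k + 1) % q)
  have hτlt : ∀ k, τ k < q := fun k => hrlt _ (Nat.mod_lt _ hq0)
  obtain ⟨φ, hφ, hφ0, hφμ⟩ := exists_phi q hq hodd lam μ hμ hlt hl (fun i => r (i % q)) τ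
    (fun i => hrlt _ (Nat.mod_lt _ hq0)) (fun i => by simp)
    (fun i hi j hj h => by
      simp only [Nat.mod_eq_of_lt hi, Nat.mod_eq_of_lt hj] at h; exact hrinj i hi j hj h)
    (fun i => by simp only [τ]; rw [httr _ (Nat.mod_lt _ hq0), Nat.mod_add_mod]) hτlt
  have hAmod : ∀ i < q, A ((i+1) % q) = A (i+1) := by
    intro i hi
    rcases Nat.lt_or_ge (i+1) q with h | h
    · rw [Nat.mod_eq_of_lt h]
    · have : i + 1 = q := by omega
      rw [this, Nat.mod_self]
      show G^[0] '' B = G^[q] '' B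
      rw [hper]; simp
  refine ⟨{ f := fun t x => ((G (θ + t • ω, Set.projIcc 0 1 zero_le_one x)).2 : ℝ)
            hf := ?_
            C := fun t k => {x : ℝ | ∃ h : x ∈ Set.Icc (0:ℝ) 1, (θ + t • ω, (⟨x, h⟩ : II)) ∈ A (tt k)}
            τ := τ
            hτ := hτlt
            ne := ?_
            maps := ?_
            sub := ?_
            δ := δ
            hδ := hδ
            gap := ?_
            φ := φ
            hφ := hφ
            hφ0 := hφ0
            μ := μ
            hμ0 := hμ
            hμ := hφμ }, θ, rfl, fun t x => rfl⟩
  · intro t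
    have h1 : Continuous (fun x : ℝ => Set.projIcc (0:ℝ) 1 zero_le_one x) := continuous_projIcc
    exact continuous_subtype_val.comp (continuous_snd.comp (hG.comp (Continuous.prodMk continuous_const h1)))
  · intro t k hk
    obtain ⟨x, hx⟩ := hAne (tt k) (θ + t • ω)
    exact ⟨x, x.2, hx⟩
  · rintro t k x hk ⟨hx, hmem⟩
    rw [Set.projIcc_of_mem _ hx]
    refine ⟨Subtype.mem _, ?_⟩
    have e1 : tt (τ k) = (tt k + 1) % q := httr _ (Nat.mod_lt _ hq0)
    rw [e1, hAmod _ (htt k hk).1]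
    obtain ⟨p, hp, he⟩ := hmem
    refine ⟨p, hp, ?_⟩
    rw [Function.iterate_succ_apply', he]
    apply Prod.ext
    · rw [hω, succ_nsmul, add_assoc]
    · rfl
  · rintro t k x hk ⟨hx, -⟩
    exact hx
  · rintro t k l x y hkl hlq ⟨hx, hx'⟩ ⟨hy, hy'⟩
    have hk := htt k (by omega)
    have hl := htt l hlq
    have h1 := hθ t _ _ (hrLT _ hk.1 _ hl.1 (by rw [hk.2, hl.2]; exact hkl))
    have h2 := (le_MA hx').trans_lt (h1.trans_le (mA_le hy'))
    have h3 := hgap _ hk.1 _ hl.1 (by intro h; have := hk.2; rw [h, hl.2] at this; omega) _ hx' _ hy'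
    rw [Prod.dist_eq] at h3
    simp only [dist_self, Subtype.dist_eq, Real.dist_eq] at h3 h2
    rw [abs_sub_comm, abs_of_pos (by linarith), max_eq_right (by linarith)] at h3
    linarith


lemma lower_bound (M q : ℕ) (hM : 1 ≤ M) (hq : 3 ≤ q) (hodd : Odd q) (lam : ℝ)
    (hl : lam ^ q - 2 * lam ^ (q - 2) - 1 = 0) (h1 : 1 < lam)
    (F : Cyl → Cyl) (hF : IsQPF F) (B : Set Cyl) (hB : IsPeriodicStripOrbit F (M * q) B) :
    ((Real.log lam / M : ℝ) : EReal) ≤ coverEntropy F Set.univ := by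
  classical
  obtain ⟨hFc, ω, -, hω⟩ := hF
  obtain ⟨hBs, hBp, hBo⟩ := hB
  have hM0 : (0:ℝ) < M := by exact_mod_cast hM
  rw [← EReal.ge_of_forall_gt_iff_ge]
  intro a ha
  have ha' : a < Real.log lam / M := by exact_mod_cast ha
  rw [lt_div_iff₀ hM0] at ha'
  obtain ⟨l, hl1, hl2⟩ := exists_between ha'
  have hlam0 : 0 < lam := by linarith
  have hfst : ∀ i p, (F^[i] p).1 = p.1 + i • (ω : S1) := by
    intro i
    induction i with
    | zero => intro p; simp
    | succ i ih => intro p; rw [Function.iterate_succ_apply', hω, ih, succ_nsmul, add_assoc]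
  have hGit : ∀ i, (F^[M])^[i] = F^[M * i] := fun i => (Function.iterate_mul F M i).symm
  obtain ⟨S, θ, hSμ, hSf⟩ := extraction (F^[M]) (hFc.iterate M) (M • (ω : S1)) (hfst M) q hq hodd B hBs
    (by rw [hGit]; exact hBp)
    (by
      intro i j hij hj
      rw [hGit, hGit]
      exact hBo _ _ (Nat.mul_lt_mul_of_pos_left hij hM) (Nat.mul_lt_mul_of_pos_left hj hM))
    lam (Real.exp l) (Real.exp_pos l) ((Real.lt_log_iff_exp_lt hlam0).1 hl2) hl
  obtain ⟨N, hN⟩ := exists_nat_gt (Real.log 2 / (l - a * M))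
  rw [div_lt_iff₀ (by linarith)] at hN
  set G := F^[M] with hGdef
  have hGc : Continuous G := hFc.iterate M
  have hit : ∀ t n x, (θ + (t + n) • (M • (ω:S1)), Set.projIcc (0:ℝ) 1 zero_le_one (S.it t n x))
      = G^[n] (θ + t • (M • (ω:S1)), Set.projIcc (0:ℝ) 1 zero_le_one x) := by
    intro t n x
    induction n with
    | zero => rfl
    | succ n ih =>
      rw [Function.iterate_succ_apply', ← ih]
      apply Prod.ext
      · rw [hGdef, hfst M, ← add_assoc, succ_nsmul, add_assoc]
      · simp only [LSys.it]
        rw [hSf, Set.projIcc_val]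
  have hitval : ∀ t n x, (n = 0 → x ∈ Set.Icc (0:ℝ) 1) →
      ((G^[n] (θ + t • (M • (ω:S1)), Set.projIcc (0:ℝ) 1 zero_le_one x)).2 : ℝ) = S.it t n x := by
    intro t n x h
    rw [← hit]
    have : S.it t n x ∈ Set.Icc (0:ℝ) 1 := by
      rcases n with _ | n
      · exact h rfl
      · simp only [LSys.it]; rw [hSf]; exact Subtype.mem _
    rw [Set.projIcc_of_mem _ this]
  have huc : UniformContinuous (G^[N]) := CompactSpace.uniformContinuous_of_continuous (hGc.iterate N)
  obtain ⟨η, hη, hη'⟩ := Metric.uniformContinuous_iff.1 huc S.δ S.hδ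
  have hNpos : N ≠ 0 := by
    rintro rfl
    have := Real.log_pos (by norm_num : (1:ℝ) < 2)
    simp at hN; linarith
  have hL4 := LSys.L4 S η hη N (by
    intro t x y hxy
    have h2 := hη' (a := (θ + t • (M • (ω:S1)), Set.projIcc (0:ℝ) 1 zero_le_one x))
      (b := (θ + t • (M • (ω:S1)), Set.projIcc (0:ℝ) 1 zero_le_one y)) (by
      rw [Prod.dist_eq]
      simp only [dist_self]
      have h3 := (LipschitzWith.projIcc (zero_le_one (α := ℝ))).dist_le_mul x y
      simp only [NNReal.coe_one, one_mul, Real.dist_eq] at h3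
      exact max_lt hη (h3.trans_lt hxy))
    rw [Prod.dist_eq] at h2
    have h4 := (le_max_right _ _).trans_lt h2
    rw [Subtype.dist_eq, Real.dist_eq, hitval _ _ _ (fun h => absurd h hNpos),
      hitval _ _ _ (fun h => absurd h hNpos)] at h4
    exact h4)
  rw [hSμ] at hL4
  apply ent_lower F a η hη
  -- frequently
  obtain ⟨m0, hm0⟩ := exists_nat_gt (a * M / (N * (l - a * M) - Real.log 2))
  have hpos : 0 < N * (l - a * M) - Real.log 2 := by linarith
  rw [div_lt_iff₀ hpos] at hm0
  rw [Filter.frequently_atTop]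
  intro n0
  obtain ⟨A, hA, hsep, hcard⟩ := hL4 (m0 + n0)
  refine ⟨M * (N * (m0 + n0) + 1), ?_, ?_⟩
  · have e1 : m0 + n0 ≤ N * (m0 + n0) := Nat.le_mul_of_pos_left _ (Nat.pos_of_ne_zero hNpos)
    have e2 : N * (m0 + n0) + 1 ≤ M * (N * (m0 + n0) + 1) := Nat.le_mul_of_pos_left _ hM
    omega
  · have hinj : Set.InjOn (fun x : ℝ => ((θ, Set.projIcc (0:ℝ) 1 zero_le_one x) : Cyl)) A := by
      intro x hx y hy h
      have h2 := congrArg (fun p : Cyl => (p.2 : ℝ)) h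
      simp only [Set.projIcc_of_mem _ (hA x hx), Set.projIcc_of_mem _ (hA y hy)] at h2
      exact h2
    refine ⟨A.image (fun x : ℝ => ((θ, Set.projIcc (0:ℝ) 1 zero_le_one x) : Cyl)), ?_, ?_⟩
    · rw [Finset.card_image_of_injOn hinj]
      refine le_trans ?_ hcard
      have e1 : Real.exp l ^ N / 2 = Real.exp (N * l - Real.log 2) := by
        rw [Real.exp_sub, Real.exp_log (by norm_num), Real.exp_nat_mul]
      rw [e1, ← Real.exp_nat_mul, Real.exp_le_exp]
      push_cast
      have : (0:ℝ) ≤ n0 := by positivity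
      nlinarith
    · intro x hx y hy hne
      obtain ⟨x, hxA, rfl⟩ := Finset.mem_image.1 hx
      obtain ⟨y, hyA, rfl⟩ := Finset.mem_image.1 hy
      obtain ⟨k, hk, hd⟩ := hsep x hxA y hyA (by rintro rfl; exact hne rfl)
      refine ⟨M * k, Nat.mul_lt_mul_of_pos_left hk hM, ?_⟩
      rw [← hGit, Prod.dist_eq]
      apply le_max_of_le_right
      have e1 := hitval 0 k x (fun _ => hA x hxA)
      have e2 := hitval 0 k y (fun _ => hA y hyA)
      simp only [zero_smul, add_zero] at e1 e2
      rw [Subtype.dist_eq, Real.dist_eq, e1, e2]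
      exact hd


def GoodMap (f : ℝ → ℝ) (μ : ℝ) : Prop :=
  ∃ ψ : ℝ → ℝ, ∀ x y, 0 ≤ x → x ≤ y → y ≤ 1 → y - x ≤ ψ y - ψ x ∧ |ψ (f x) - ψ (f y)| ≤ μ * (ψ y - ψ x)

def HasOrbit (f : ℝ → ℝ) (m : ℕ) : Prop :=
  ∃ o : ℕ → ℝ, (∀ i, o i ∈ Set.Icc (0:ℝ) 1) ∧ (∀ i, f (o i) = o (i+1)) ∧ (∀ i, o (i + m) = o i) ∧
    ∀ i j, i < j → j < m → o i ≠ o j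

lemma upper_bound (ω : S1) (f : ℝ → ℝ) (F : Cyl → Cyl) (hF1 : ∀ p, (F p).1 = p.1 + ω)
    (hF2 : ∀ p, ((F p).2 : ℝ) = f p.2) (μ a : ℝ) (hμ : 1 ≤ μ) (hg : GoodMap f μ) (ha : Real.log μ < a) :
    coverEntropy F Set.univ ≤ (a : EReal) := by
  classical
  obtain ⟨ψ, hψ⟩ := hg
  have hμ0 : 0 < μ := by linarith
  have hsym : ∀ x y : II, |(x:ℝ) - y| ≤ |ψ x - ψ y| ∧ |ψ (f x) - ψ (f y)| ≤ μ * |ψ x - ψ y| := by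
    have key : ∀ x y : II, x ≤ y → |(x:ℝ) - y| ≤ |ψ x - ψ y| ∧ |ψ (f x) - ψ (f y)| ≤ μ * |ψ x - ψ y| := by
      intro x y h
      have h' : (x:ℝ) ≤ y := h
      obtain ⟨h1, h2⟩ := hψ x y x.2.1 h y.2.2
      rw [abs_sub_comm, abs_sub_comm (ψ x), abs_of_nonneg (by linarith), abs_of_nonneg (by linarith : 0 ≤ ψ y - ψ x)]
      exact ⟨h1, h2⟩
    intro x y
    rcases le_total x y with h | h
    · exact key x y h
    · have := key y x h
      rw [abs_sub_comm (x:ℝ), abs_sub_comm (ψ x), abs_sub_comm (ψ (f x))]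
      exact this
  have hfst : ∀ i p, (F^[i] p).1 = p.1 + i • ω := by
    intro i
    induction i with
    | zero => intro p; simp
    | succ i ih => intro p; rw [Function.iterate_succ_apply', hF1, ih, succ_nsmul, add_assoc]
  have hit : ∀ k p p', |ψ (F^[k] p).2 - ψ (F^[k] p').2| ≤ μ ^ k * |ψ p.2 - ψ p'.2| := by
    intro k p p'
    induction k with
    | zero => simp
    | succ k ih =>
      rw [Function.iterate_succ_apply', Function.iterate_succ_apply', hF2, hF2]
      refine (hsym _ _).2.trans ?_
      rw [pow_succ', mul_assoc]
      exact mul_le_mul_of_nonneg_left ih hμ0.le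
  apply ent_upper F a
  intro ε hε
  obtain ⟨t, -, htf, htc⟩ := Metric.totallyBounded_iff.1 (isCompact_univ (X := S1)).totallyBounded ε hε |>.imp (fun t h => (⟨trivial, h.1, h.2⟩ : True ∧ _ ∧ _))
  set D := (ψ 1 - ψ 0) / ε with hD
  have hD0 : 0 ≤ D := by
    have := (hψ 0 1 le_rfl zero_le_one le_rfl).1
    rw [hD]; apply div_nonneg _ hε.le; linarith
  have hev : ∀ᶠ n : ℕ in Filter.atTop, (htf.toFinset.card : ℝ) * (D + 1) ≤ Real.exp ((a - Real.log μ) * n) := by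
    have h1 : Filter.Tendsto (fun n : ℕ => Real.exp ((a - Real.log μ) * n)) Filter.atTop Filter.atTop :=
      Real.tendsto_exp_atTop.comp (Filter.Tendsto.const_mul_atTop (by linarith) tendsto_natCast_atTop_atTop)
    exact h1.eventually_ge_atTop _
  filter_upwards [hev] with n hn
  let idx : II → ℕ := fun x => ⌊(ψ x - ψ 0) * μ ^ n / ε⌋₊
  let K := ⌊(ψ 1 - ψ 0) * μ ^ n / ε⌋₊
  have hμn : 0 < μ ^ n := by positivity
  have hidx : ∀ x, idx x ≤ K := by
    intro x
    apply Nat.floor_mono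
    have := (hψ x 1 x.2.1 x.2.2 le_rfl).1
    have hx := x.2.2
    gcongr
    linarith
  let rep : ℕ → II := fun j => if h : ∃ x, idx x = j then h.choose else ⟨0, by simp⟩
  have hrep : ∀ x, idx (rep (idx x)) = idx x := by
    intro x
    have h : ∃ y, idx y = idx x := ⟨x, rfl⟩
    simp only [rep]
    rw [dif_pos h]
    exact h.choose_spec
  refine ⟨(htf.toFinset ×ˢ Finset.range (K+1)).image (fun p => (p.1, rep p.2)), ?_, ?_⟩
  · refine (Nat.cast_le.2 Finset.card_image_le).trans ?_
    rw [Finset.card_product, Finset.card_range]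
    push_cast
    have hK : (K : ℝ) ≤ D * μ ^ n := by
      have : (K:ℝ) ≤ (ψ 1 - ψ 0) * μ ^ n / ε := by
        apply Nat.floor_le
        rw [mul_div_right_comm]
        positivity
      rw [mul_div_right_comm] at this
      exact this
    have h1 : (1:ℝ) ≤ μ ^ n := one_le_pow₀ hμ
    have e : Real.exp (a * n) = Real.exp ((a - Real.log μ) * n) * μ ^ n := by
      conv_rhs => rw [← Real.exp_log hμ0, ← Real.exp_nat_mul, ← Real.exp_add]
      rw [Real.log_exp]
      congr 1; ring
    rw [e]
    have e2 : (htf.toFinset.card : ℝ) * (K + 1) ≤ htf.toFinset.card * ((D + 1) * μ ^ n) := by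
      gcongr; linarith
    refine e2.trans ?_
    rw [← mul_assoc]
    gcongr
  · rintro ⟨θ, x⟩
    have hθ := htc (Set.mem_univ θ)
    simp only [Set.mem_iUnion] at hθ
    obtain ⟨c, hc, hθc⟩ := hθ
    refine ⟨(c, rep (idx x)), ?_, ?_⟩
    · rw [Finset.mem_image]
      refine ⟨(c, idx x), ?_, rfl⟩
      rw [Finset.mem_product]
      exact ⟨by simpa using hc, by simpa using Nat.lt_succ_of_le (hidx x)⟩
    · intro k hk
      rw [Prod.dist_eq]
      apply max_lt
      · rw [hfst, hfst, dist_add_right]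
        exact hθc
      · rw [Subtype.dist_eq, Real.dist_eq]
        refine (hsym _ _).1.trans_lt ((hit k _ _).trans_lt ?_)
        have h0 : ∀ y : II, 0 ≤ (ψ y - ψ 0) * μ ^ n / ε := by
          intro y
          have := (hψ 0 y le_rfl y.2.1 y.2.2).1
          have hy := y.2.1
          have : 0 ≤ ψ y - ψ 0 := by linarith
          positivity
        have f1 := Nat.floor_le (h0 x)
        have f2 := Nat.lt_floor_add_one ((ψ x - ψ 0) * μ ^ n / ε)
        have f3 := Nat.floor_le (h0 (rep (idx x)))
        have f4 := Nat.lt_floor_add_one ((ψ (rep (idx x)) - ψ 0) * μ ^ n / ε)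
        have f5 : ⌊(ψ (rep (idx x)) - ψ 0) * μ ^ n / ε⌋₊ = ⌊(ψ x - ψ 0) * μ ^ n / ε⌋₊ := hrep x
        rw [f5] at f3 f4
        have f6 : |(ψ x - ψ 0) * μ ^ n / ε - (ψ (rep (idx x)) - ψ 0) * μ ^ n / ε| < 1 := by
          rw [abs_lt]; constructor <;> linarith
        have f7 : (ψ x - ψ 0) * μ ^ n / ε - (ψ (rep (idx x)) - ψ 0) * μ ^ n / ε = (μ ^ n / ε) * (ψ x - ψ (rep (idx x))) := by ring
        rw [f7, abs_mul, abs_of_pos (by positivity), div_mul_eq_mul_div, div_lt_one hε] at f6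
        refine lt_of_le_of_lt ?_ f6
        gcongr

lemma strip_orbit (ω : S1) (f : ℝ → ℝ) (F : Cyl → Cyl) (hF1 : ∀ p, (F p).1 = p.1 + ω)
    (hF2 : ∀ p, ((F p).2 : ℝ) = f p.2) (m : ℕ) (ho : HasOrbit f m) : ∃ B, IsPeriodicStripOrbit F m B := by
  obtain ⟨o, ho1, ho2, ho3, ho4⟩ := ho
  let oo : ℕ → II := fun i => ⟨o i, ho1 i⟩
  let B : ℕ → Set Cyl := fun i => {p | p.2 = oo i}
  have hFB : ∀ i, F '' B i = B (i+1) := by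
    intro i
    ext p
    constructor
    · rintro ⟨p', hp', rfl⟩
      apply Subtype.ext
      have hp'' : p'.2 = oo i := hp'
      rw [hF2, hp'']; exact ho2 i
    · intro hp
      have hp2 : p.2 = oo (i+1) := hp
      refine ⟨(p.1 - ω, oo i), rfl, ?_⟩
      apply Prod.ext
      · rw [hF1]; simp
      · apply Subtype.ext
        rw [hF2, hp2]
        exact ho2 i
  have hit : ∀ i, F^[i] '' B 0 = B i := by
    intro i
    induction i with
    | zero => simp
    | succ i ih => rw [Function.iterate_succ', Set.image_comp, ih, hFB]
  have hfib : ∀ i θ, fiber (B i) θ = {oo i} := by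
    intro i θ; ext x; rfl
  refine ⟨B 0, ⟨?_, ?_, ?_⟩, ?_, ?_⟩
  · exact isClosed_eq continuous_snd continuous_const
  · intro θ; exact ⟨oo 0, rfl⟩
  · refine ⟨Set.univ, Filter.univ_mem, fun θ _ => ⟨oo 0, oo 0, le_rfl, ?_⟩⟩
    rw [hfib, Set.Icc_self]
  · rw [hit]
    ext p
    have : oo m = oo 0 := Subtype.ext (by have := ho3 0; rw [zero_add] at this; exact this)
    show p.2 = oo m ↔ p.2 = oo 0
    rw [this]
  · intro i j hij hj
    rw [hit, hit]
    have hne := ho4 i j hij hj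
    constructor
    · rw [Set.disjoint_left]
      intro p hp hp'
      have h1 : p.2 = oo i := hp
      have h2 : p.2 = oo j := hp'
      rw [h1] at h2
      exact hne (congrArg Subtype.val h2)
    · have hlt : ∀ i j, o i < o j → stripLT (B i) (B j) := by
        intro i j h
        refine ⟨Set.univ, Filter.univ_mem, fun θ _ => ?_⟩
        simp only [MA, mA, hfib, Set.image_singleton, csSup_singleton, csInf_singleton]
        exact h
      rcases lt_or_gt_of_ne hne with h | h
      · exact Or.inl (hlt i j h)
      · exact Or.inr (hlt j i h)


lemma base_one : ∃ f : ℝ → ℝ, Continuous f ∧ (∀ x ∈ Set.Icc (0:ℝ) 1, f x ∈ Set.Icc (0:ℝ) 1) ∧ HasOrbit f 1 ∧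
    ∀ μ : ℝ, 1 < μ → GoodMap f μ := by
  refine ⟨fun _ => 0, continuous_const, by simp, ⟨fun _ => 0, by simp, by simp, by simp, by intro i j h1 h2; omega⟩, ?_⟩
  intro μ hμ
  refine ⟨id, fun x y h0 hxy h1 => ⟨le_rfl, ?_⟩⟩
  simp only [id, sub_self, abs_zero]
  exact mul_nonneg (by linarith) (by linarith)

lemma base_three (q : ℕ) (hq : 3 ≤ q) (hodd : Odd q) (β : ℝ) (hβ : 1 < β)
    (hl : β ^ q - 2 * β ^ (q - 2) - 1 = 0) :
    ∃ f : ℝ → ℝ, Continuous f ∧ (∀ x ∈ Set.Icc (0:ℝ) 1, f x ∈ Set.Icc (0:ℝ) 1) ∧ HasOrbit f q ∧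
    ∀ μ : ℝ, β < μ → GoodMap f μ := by
  have hβ0 : 0 < β := by linarith
  obtain ⟨p, rfl⟩ : ∃ p, q = p + 3 := ⟨q - 3, by omega⟩
  have hev : Even p := by
    obtain ⟨k, hk⟩ := hodd
    exact ⟨k - 1, by omega⟩
  rw [show p + 3 - 2 = p + 1 by omega] at hl
  set b := β ^ p with hb
  have hb0 : 0 < b := by positivity
  have e1 : β ^ (p+1) = b * β := pow_succ β p
  have e2 : β ^ (p+2) = b * β * β := by rw [pow_succ, e1]
  have e3 : β ^ (p+3) = b * β * β * β := by rw [pow_succ, e2]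
  rw [e1, e3] at hl
  set Λ := b * β * β + b * β with hΛ
  have hΛ0 : 0 < Λ := by positivity
  let g : ℝ → ℝ := fun y => β * (|y - b| - b)
  have hgl : ∀ y ≤ b, g y = - β * y := by
    intro y hy; simp only [g]; rw [abs_of_nonpos (by linarith)]; ring
  have hgr : ∀ y, b ≤ y → g y = β * (y - 2 * b) := by
    intro y hy; simp only [g]; rw [abs_of_nonneg (by linarith)]; ring
  have hb1 : 1 ≤ b * β * β := by
    have : 1 ≤ b := one_le_pow₀ hβ.le
    nlinarith [mul_pos hb0 hβ0]
  have hgm : ∀ y, -(b * β) ≤ y → y ≤ b * β * β → -(b * β) ≤ g y ∧ g y ≤ b * β * β := by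
    intro y h1 h2
    rcases le_total y b with h | h
    · rw [hgl y h]; constructor <;> nlinarith
    · rw [hgr y h]; constructor <;> nlinarith
  let f : ℝ → ℝ := fun x => (g (Λ * x - b * β) + b * β) / Λ
  have hflip : ∀ x y, |f x - f y| ≤ β * |x - y| := by
    intro x y
    have h1 : f x - f y = (β * (|Λ * x - b * β - b| - |Λ * y - b * β - b|)) / Λ := by
      simp only [f, g]; ring
    rw [h1, abs_div, abs_of_pos hΛ0, abs_mul, abs_of_pos hβ0, div_le_iff₀ hΛ0]
    have h2 := abs_abs_sub_abs_le_abs_sub (Λ * x - b * β - b) (Λ * y - b * β - b)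
    have h3 : Λ * x - b * β - b - (Λ * y - b * β - b) = Λ * (x - y) := by ring
    rw [h3, abs_mul, abs_of_pos hΛ0] at h2
    nlinarith
  have hpow : ∀ j, j < p + 3 → -(b * β) ≤ (-β) ^ j ∧ (-β) ^ j ≤ b * β * β := by
    intro j hj
    rcases Nat.even_or_odd j with h | h
    · rw [h.neg_pow]
      have h1 : β ^ j ≤ β ^ (p+2) := pow_le_pow_right₀ hβ.le (by omega)
      have h2 : 0 < β ^ j := by positivity
      have h3 : 0 < b * β := by positivity
      rw [e2] at h1
      constructor <;> linarith
    · rw [h.neg_pow]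
      have h1 : β ^ j ≤ β ^ (p+1) := by
        apply pow_le_pow_right₀ hβ.le
        obtain ⟨k, hk⟩ := h
        obtain ⟨l, hl⟩ := hev
        omega
      have h2 : 0 < β ^ j := by positivity
      rw [e1] at h1
      constructor <;> linarith
  have hgo : ∀ j, j < p + 2 → g ((-β) ^ j) = (-β) ^ (j+1) := by
    intro j hj
    rw [hgl, pow_succ]; · ring
    rcases Nat.even_or_odd j with h | h
    · rw [h.neg_pow]
      apply pow_le_pow_right₀ hβ.le
      obtain ⟨k, hk⟩ := h
      obtain ⟨l, hl⟩ := hev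
      omega
    · rw [h.neg_pow]
      have h2 : 0 < β ^ j := by positivity
      linarith
  have hgo' : g ((-β) ^ (p+2)) = 1 := by
    have : Even (p+2) := by
      obtain ⟨l, hl⟩ := hev
      exact ⟨l + 1, by omega⟩
    rw [this.neg_pow, e2, hgr]
    · nlinarith
    · nlinarith [mul_pos hb0 hβ0]
  refine ⟨f, ?_, ?_, ?_, ?_⟩
  · simp only [f, g]; fun_prop
  · intro x hx
    have h1 : -(b*β) ≤ Λ * x - b * β := by nlinarith [hx.1]
    have h2 : Λ * x - b * β ≤ b * β * β := by nlinarith [hx.2]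
    obtain ⟨h3, h4⟩ := hgm _ h1 h2
    simp only [f]
    constructor
    · apply div_nonneg _ hΛ0.le; linarith
    · rw [div_le_one hΛ0]; linarith
  · refine ⟨fun i => ((-β) ^ (i % (p+3)) + b * β) / Λ, ?_, ?_, ?_, ?_⟩
    · intro i
      obtain ⟨h1, h2⟩ := hpow (i % (p+3)) (Nat.mod_lt _ (by omega))
      constructor
      · apply div_nonneg _ hΛ0.le; linarith
      · rw [div_le_one hΛ0]; linarith
    · intro i
      simp only [f]
      have h1 : Λ * (((-β) ^ (i % (p+3)) + b * β) / Λ) - b * β = (-β) ^ (i % (p+3)) := by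
        field_simp; ring
      rw [h1]
      congr 2
      have hlt := Nat.mod_lt i (show 0 < p + 3 by omega)
      rw [← Nat.mod_add_mod]
      rcases Nat.lt_or_ge (i % (p+3) + 1) (p+3) with h | h
      · rw [Nat.mod_eq_of_lt h]; exact hgo _ (by omega)
      · have : i % (p+3) = p + 2 := by omega
        rw [this, hgo', Nat.mod_self, pow_zero]
    · intro i; simp
    · intro i j hij hj h
      simp only [Nat.mod_eq_of_lt hj, Nat.mod_eq_of_lt (hij.trans hj)] at h
      rw [div_left_inj' hΛ0.ne', add_left_inj] at h
      have h2 := congrArg abs h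
      rw [abs_pow, abs_pow, abs_neg, abs_of_pos hβ0] at h2
      exact (pow_lt_pow_right₀ hβ hij).ne h2
  · intro μ hμ
    refine ⟨id, fun x y h0 hxy h1 => ⟨le_rfl, ?_⟩⟩
    simp only [id]
    refine (hflip x y).trans ?_
    rw [abs_sub_comm, abs_of_nonneg (by linarith)]
    gcongr


noncomputable def cl01 (u : ℝ) : ℝ := max 0 (min u 1)

lemma cl01_mono {u v : ℝ} (h : u ≤ v) : cl01 u ≤ cl01 v := by
  unfold cl01; gcongr
lemma cl01_nonneg (u : ℝ) : 0 ≤ cl01 u := le_max_left _ _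
lemma cl01_le (u : ℝ) : cl01 u ≤ 1 := max_le zero_le_one (min_le_right _ _)
lemma cl01_of_le {u : ℝ} (h : u ≤ 0) : cl01 u = 0 := by
  unfold cl01; rw [min_eq_left (by linarith), max_eq_left h]
lemma cl01_of_ge {u : ℝ} (h : 1 ≤ u) : cl01 u = 1 := by
  unfold cl01; rw [min_eq_right h, max_eq_right (by norm_num)]
lemma cl01_of_mem {u : ℝ} (h : 0 ≤ u) (h' : u ≤ 1) : cl01 u = u := by
  unfold cl01; rw [min_eq_left h', max_eq_right h]
lemma cl01_cont : Continuous cl01 := by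
  unfold cl01; fun_prop
lemma cl01_sum {x : ℝ} (h0 : 0 ≤ x) (h1 : x ≤ 1) : cl01 (3*x) + cl01 (3*x-1) + cl01 (3*x-2) = 3 * x := by
  rcases le_total x (1/3) with h | h
  · rw [cl01_of_mem (by linarith) (by linarith), cl01_of_le (by linarith), cl01_of_le (by linarith)]; ring
  · rcases le_total x (2/3) with h' | h'
    · rw [cl01_of_ge (by linarith), cl01_of_mem (by linarith) (by linarith), cl01_of_le (by linarith)]; ring
    · rw [cl01_of_ge (by linarith), cl01_of_ge (by linarith), cl01_of_mem (by linarith) (by linarith)]; ring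

noncomputable def fh (f : ℝ → ℝ) (x : ℝ) : ℝ := 2/3 + f 1 / 3 - (2 + f 1) / 3 * cl01 (3*x-1)
noncomputable def Dbl (f : ℝ → ℝ) (x : ℝ) : ℝ :=
  2/3 + f (cl01 (3*x)) / 3 - (2 + f 1) / 3 * cl01 (3*x-1) + cl01 (3*x-2) / 3

lemma series_aux (s : ℝ) (hs : 1 < s) (g ρ : ℝ → ℝ) (hg : Antitone g) (hρ : Monotone ρ) (K : ℝ)
    (hK : ∀ x, |ρ x| ≤ K) : ∃ Ψ : ℝ → ℝ, (∀ x y, x ≤ y → ρ y - ρ x ≤ Ψ y - Ψ x) ∧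
      ∀ x, s * Ψ x + Ψ (g x) = s * ρ x := by
  have hs0 : 0 < s := by linarith
  have habs : |(-1/s)| < 1 := by
    rw [abs_div, abs_neg, abs_one, abs_of_pos hs0, div_lt_one hs0]; exact hs
  have hsum : ∀ x, Summable (fun k : ℕ => (-1/s)^k * ρ (g^[k] x)) := by
    intro x
    apply Summable.of_norm_bounded (g := fun k : ℕ => |(-1/s)| ^ k * K)
    · exact (summable_geometric_of_lt_one (abs_nonneg _) habs).mul_right K
    · intro k
      rw [Real.norm_eq_abs, abs_mul, abs_pow]
      exact mul_le_mul_of_nonneg_left (hK _) (by positivity)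
  have hmono : ∀ k : ℕ, ∀ x y, x ≤ y → (-1/s)^k * ρ (g^[k] x) ≤ (-1/s)^k * ρ (g^[k] y) := by
    intro k x y hxy
    rcases Nat.even_or_odd k with h | h
    · have h1 : Monotone g^[k] := by
        obtain ⟨l, rfl⟩ := h
        rw [← two_mul, Function.iterate_mul]
        have : Monotone (g^[2]) := hg.comp hg
        exact this.iterate l
      have h2 : 0 ≤ (-1/s)^k := h.pow_nonneg _
      exact mul_le_mul_of_nonneg_left (hρ (h1 hxy)) h2
    · have h1 : Antitone g^[k] := by
        obtain ⟨l, rfl⟩ := h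
        rw [show g^[2*l+1] = g ∘ g^[2*l] from Function.iterate_succ' g (2*l), Function.iterate_mul]
        have : Monotone (g^[2]) := hg.comp hg
        exact hg.comp_monotone (this.iterate l)
      have h2 : (-1/s)^k ≤ 0 := h.pow_nonpos (by apply div_nonpos_of_nonpos_of_nonneg <;> linarith)
      exact mul_le_mul_of_nonpos_left (hρ (h1 hxy)) h2
  have heq : ∀ x, ∑' k : ℕ, (-1/s)^k * ρ (g^[k] x) = ρ x + ∑' k : ℕ, (-1/s)^(k+1) * ρ (g^[k+1] x) := by
    intro x
    rw [(hsum x).tsum_eq_zero_add]; simp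
  refine ⟨fun x => ∑' k : ℕ, (-1/s)^k * ρ (g^[k] x), ?_, ?_⟩
  · intro x y hxy
    simp only
    rw [heq, heq]
    have : ∑' k : ℕ, (-1/s)^(k+1) * ρ (g^[k+1] x) ≤ ∑' k : ℕ, (-1/s)^(k+1) * ρ (g^[k+1] y) :=
      Summable.tsum_le_tsum (fun k => hmono (k+1) x y hxy) ((summable_nat_add_iff 1).2 (hsum x)) ((summable_nat_add_iff 1).2 (hsum y))
    linarith
  · intro x
    simp only
    rw [heq x]
    have : ∑' k : ℕ, (-1/s)^(k+1) * ρ (g^[k+1] x) = (-1/s) * ∑' k : ℕ, (-1/s)^k * ρ (g^[k] (g x)) := by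
      rw [← tsum_mul_left]
      apply tsum_congr
      intro k
      rw [Function.iterate_succ_apply, pow_succ]; ring
    rw [this]
    field_simp; ring

lemma good_step (f : ℝ → ℝ) (hf : ∀ x ∈ Set.Icc (0:ℝ) 1, f x ∈ Set.Icc (0:ℝ) 1) (s : ℝ) (hs : 1 < s)
    (hg : GoodMap f (s^2)) : GoodMap (Dbl f) s := by
  obtain ⟨ψ, hψ⟩ := hg
  have hs0 : 0 < s := by linarith
  have hf1 := hf 1 (by simp)
  have hψm : ∀ u v, u ≤ v → cl01 v - cl01 u ≤ ψ (cl01 v) - ψ (cl01 u) := fun u v h =>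
    (hψ _ _ (cl01_nonneg u) (cl01_mono h) (cl01_le v)).1
  let ρ : ℝ → ℝ := fun x => s * ψ (cl01 (3*x)) + cl01 (3*x-1) + ψ (cl01 (3*x-2))
  have hρ : Monotone ρ := by
    intro x y h
    have a1 := hψm (3*x) (3*y) (by linarith)
    have a2 := hψm (3*x-2) (3*y-2) (by linarith)
    have a3 := cl01_mono (show 3*x ≤ 3*y by linarith)
    have a4 := cl01_mono (show 3*x-1 ≤ 3*y-1 by linarith)
    have a5 := cl01_mono (show 3*x-2 ≤ 3*y-2 by linarith)
    simp only [ρ]; nlinarith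
  have hρ1 : ∀ x y, 0 ≤ x → x ≤ y → y ≤ 1 → y - x ≤ ρ y - ρ x := by
    intro x y h0 h h1
    have a1 := hψm (3*x) (3*y) (by linarith)
    have a2 := hψm (3*x-2) (3*y-2) (by linarith)
    have a3 := cl01_mono (show 3*x ≤ 3*y by linarith)
    have b1 := cl01_sum h0 (h.trans h1)
    have b2 := cl01_sum (h0.trans h) h1
    simp only [ρ]; nlinarith
  have hψb : ∀ u, |ψ (cl01 u)| ≤ |ψ 0| + |ψ 1| := by
    intro u
    have a1 := (hψ 0 (cl01 u) le_rfl (cl01_nonneg u) (cl01_le u)).1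
    have a2 := (hψ (cl01 u) 1 (cl01_nonneg u) (cl01_le u) le_rfl).1
    have a3 := cl01_nonneg u
    have a4 := cl01_le u
    have := neg_abs_le (ψ 0)
    have := le_abs_self (ψ 1)
    have := abs_nonneg (ψ 0)
    have := abs_nonneg (ψ 1)
    rw [abs_le]; constructor <;> linarith
  obtain ⟨Ψ, hΨ1, hΨ2⟩ := series_aux s hs (fh f) ρ (by
      intro x y h
      have a4 := cl01_mono (show 3*x-1 ≤ 3*y-1 by linarith)
      have := hf1.1
      simp only [fh]; nlinarith) hρ (s * (|ψ 0| + |ψ 1|) + 1 + (|ψ 0| + |ψ 1|)) (by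
      intro x
      have a1 := hψb (3*x)
      have a2 := hψb (3*x-2)
      have a3 := cl01_nonneg (3*x-1)
      have a4 := cl01_le (3*x-1)
      rw [abs_le] at *
      simp only [ρ]
      constructor <;> nlinarith)
  have hΨmono : Monotone Ψ := by
    intro x y h
    have := hΨ1 x y h
    have := hρ h
    linarith
  -- difference on L and R
  have hL : ∀ x y, x ≤ 1/3 → y ≤ 1/3 → Ψ y - Ψ x = s * (ψ (cl01 (3*y)) - ψ (cl01 (3*x))) := by
    intro x y hx hy
    have h1 := hΨ2 x
    have h2 := hΨ2 y
    have h3 : fh f x = fh f y := by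
      simp only [fh]; rw [cl01_of_le (by linarith), cl01_of_le (by linarith)]
    rw [h3] at h1
    have h4 : ρ y - ρ x = s * (ψ (cl01 (3*y)) - ψ (cl01 (3*x))) := by
      simp only [ρ]
      rw [cl01_of_le (show 3*x-1 ≤ 0 by linarith), cl01_of_le (show 3*y-1 ≤ 0 by linarith),
        cl01_of_le (show 3*x-2 ≤ 0 by linarith), cl01_of_le (show 3*y-2 ≤ 0 by linarith)]; ring
    have h5 : s * (Ψ y - Ψ x) = s * (ρ y - ρ x) := by linarith
    rw [← h4]
    exact mul_left_cancel₀ hs0.ne' h5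
  have hR : ∀ x y, 2/3 ≤ x → 2/3 ≤ y → Ψ y - Ψ x = ψ (cl01 (3*y-2)) - ψ (cl01 (3*x-2)) := by
    intro x y hx hy
    have h1 := hΨ2 x
    have h2 := hΨ2 y
    have h3 : fh f x = fh f y := by
      simp only [fh]; rw [cl01_of_ge (by linarith), cl01_of_ge (by linarith)]
    rw [h3] at h1
    have h4 : ρ y - ρ x = ψ (cl01 (3*y-2)) - ψ (cl01 (3*x-2)) := by
      simp only [ρ]
      rw [cl01_of_ge (show 1 ≤ 3*x-1 by linarith), cl01_of_ge (show 1 ≤ 3*y-1 by linarith),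
        cl01_of_ge (show 1 ≤ 3*x by linarith), cl01_of_ge (show 1 ≤ 3*y by linarith)]; ring
    have h5 : s * (Ψ y - Ψ x) = s * (ρ y - ρ x) := by linarith
    rw [← h4]
    exact mul_left_cancel₀ hs0.ne' h5
  have DL : ∀ x, x ≤ 1/3 → Dbl f x = 2/3 + f (cl01 (3*x)) / 3 := by
    intro x hx; simp only [Dbl]
    rw [cl01_of_le (show 3*x-1 ≤ 0 by linarith), cl01_of_le (show 3*x-2 ≤ 0 by linarith)]; ring
  have DM : ∀ x, 1/3 ≤ x → x ≤ 2/3 → Dbl f x = fh f x := by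
    intro x hx hx'; simp only [Dbl, fh]
    rw [cl01_of_ge (show 1 ≤ 3*x by linarith), cl01_of_le (show 3*x-2 ≤ 0 by linarith)]; ring
  have DR : ∀ x, 2/3 ≤ x → Dbl f x = cl01 (3*x-2) / 3 := by
    intro x hx; simp only [Dbl]
    rw [cl01_of_ge (show 1 ≤ 3*x by linarith), cl01_of_ge (show 1 ≤ 3*x-1 by linarith)]; ring
  have EL : ∀ x y, x ≤ y → y ≤ 1/3 → |Ψ (Dbl f x) - Ψ (Dbl f y)| ≤ s * (Ψ y - Ψ x) := by
    intro x y h hy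
    rw [DL x (by linarith), DL y hy, hL x y (by linarith) hy]
    have fx := hf _ ⟨cl01_nonneg (3*x), cl01_le (3*x)⟩
    have fy := hf _ ⟨cl01_nonneg (3*y), cl01_le (3*y)⟩
    rw [hR _ _ (by linarith [fy.1]) (by linarith [fx.1])]
    have e : ∀ u : ℝ, 3 * (2/3 + u/3) - 2 = u := by intro u; ring
    rw [e, e, cl01_of_mem fx.1 fx.2, cl01_of_mem fy.1 fy.2]
    have := (hψ _ _ (cl01_nonneg (3*x)) (cl01_mono (show 3*x ≤ 3*y by linarith)) (cl01_le (3*y))).2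
    nlinarith
  have ER : ∀ x y, 2/3 ≤ x → x ≤ y → |Ψ (Dbl f x) - Ψ (Dbl f y)| ≤ s * (Ψ y - Ψ x) := by
    intro x y hx h
    rw [DR x hx, DR y (by linarith), hR x y hx (by linarith)]
    have a1 := cl01_le (3*x-2)
    have a2 := cl01_le (3*y-2)
    have a3 := cl01_nonneg (3*x-2)
    have a4 := cl01_nonneg (3*y-2)
    have a5 := cl01_mono (show 3*x-2 ≤ 3*y-2 by linarith)
    have a6 := hψm (3*x-2) (3*y-2) (by linarith)
    rw [hL _ _ (by linarith) (by linarith)]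
    have e : ∀ u : ℝ, 3 * (u/3) = u := by intro u; ring
    rw [e, e, cl01_of_mem a3 a1, cl01_of_mem a4 a2, abs_mul, abs_of_pos hs0, abs_of_nonpos (by linarith)]
    apply le_of_eq; ring
  have EM : ∀ x y, 1/3 ≤ x → x ≤ y → y ≤ 2/3 → |Ψ (Dbl f x) - Ψ (Dbl f y)| ≤ s * (Ψ y - Ψ x) := by
    intro x y hx h hy
    rw [DM x hx (by linarith), DM y (by linarith) hy]
    have h1 := hΨ2 x
    have h2 := hΨ2 y
    have h3 := hΨ1 x y h
    have h4 := hρ h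
    have h5 : fh f y ≤ fh f x := by
      have a4 := cl01_mono (show 3*x-1 ≤ 3*y-1 by linarith)
      have := hf1.1
      simp only [fh]; nlinarith
    have h6 := hΨmono h5
    rw [abs_of_nonneg (by linarith)]
    nlinarith
  have comb : ∀ x y z, |Ψ (Dbl f x) - Ψ (Dbl f y)| ≤ s * (Ψ y - Ψ x) → |Ψ (Dbl f y) - Ψ (Dbl f z)| ≤ s * (Ψ z - Ψ y) →
      |Ψ (Dbl f x) - Ψ (Dbl f z)| ≤ s * (Ψ z - Ψ x) := by
    intro x y z h1 h2
    have := abs_sub_le (Ψ (Dbl f x)) (Ψ (Dbl f y)) (Ψ (Dbl f z))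
    linarith
  have EM' : ∀ x y, x ≤ y → y ≤ 2/3 → |Ψ (Dbl f x) - Ψ (Dbl f y)| ≤ s * (Ψ y - Ψ x) := by
    intro x y h hy
    rcases le_total y (1/3) with h1 | h1
    · exact EL x y h h1
    · rcases le_total x (1/3) with h2 | h2
      · exact comb x (1/3) y (EL _ _ h2 le_rfl) (EM _ _ le_rfl h1 hy)
      · exact EM x y h2 h hy
  refine ⟨Ψ, fun x y h0 h h1 => ⟨(hρ1 x y h0 h h1).trans (hΨ1 x y h), ?_⟩⟩
  rcases le_total y (2/3) with h3 | h3
  · exact EM' x y h h3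
  · rcases le_total x (2/3) with h2 | h2
    · exact comb x (2/3) y (EM' _ _ h2 le_rfl) (ER _ _ le_rfl h3)
    · exact ER x y h2 h

lemma orbit_step (f : ℝ → ℝ) (m : ℕ) (ho : HasOrbit f m) : HasOrbit (Dbl f) (2 * m) := by
  obtain ⟨o, ho1, ho2, ho3, ho4⟩ := ho
  have he : ∀ i, (o i / 3 ≤ 1/3 ∧ 0 ≤ o i / 3) := fun i => by
    have := ho1 i; constructor <;> linarith [this.1, this.2]
  refine ⟨fun n => if n % 2 = 0 then o (n/2) / 3 else 2/3 + o (n/2+1) / 3, ?_, ?_, ?_, ?_⟩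
  · intro i
    dsimp only
    have h1 := he (i/2)
    have h2 := he (i/2+1)
    split_ifs
    · constructor <;> linarith
    · constructor <;> linarith
  · intro i
    dsimp only
    have h1 := ho1 (i/2)
    have h2 := ho1 (i/2+1)
    rcases Nat.mod_two_eq_zero_or_one i with h | h
    · have h' : ¬ (i+1) % 2 = 0 := by omega
      rw [if_pos h, if_neg h', show (i+1)/2 = i/2 by omega]
      simp only [Dbl]
      rw [cl01_of_le (show 3*(o (i/2)/3)-1 ≤ 0 by linarith [h1.2]), cl01_of_le (show 3*(o (i/2)/3)-2 ≤ 0 by linarith [h1.2]),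
        show 3*(o (i/2)/3) = o (i/2) by ring, cl01_of_mem h1.1 h1.2, ho2]
      ring
    · have h' : (i+1) % 2 = 0 := by omega
      rw [if_neg (by omega), if_pos h', show (i+1)/2 = i/2+1 by omega]
      simp only [Dbl]
      rw [cl01_of_ge (show 1 ≤ 3*(2/3 + o (i/2+1)/3) by linarith [h2.1]), cl01_of_ge (show 1 ≤ 3*(2/3 + o (i/2+1)/3) - 1 by linarith [h2.1]),
        show 3*(2/3 + o (i/2+1)/3) - 2 = o (i/2+1) by ring, cl01_of_mem h2.1 h2.2]
      ring
  · intro i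
    dsimp only
    rw [show (i + 2*m) % 2 = i % 2 by omega, show (i + 2*m)/2 = i/2 + m by omega, ho3,
      show i/2 + m + 1 = (i/2 + 1) + m by omega, ho3]
  · intro i j hij hj
    dsimp only
    have a1 := ho1 (i/2)
    have a2 := ho1 (i/2+1)
    have b1 := ho1 (j/2)
    have b2 := ho1 (j/2+1)
    rcases Nat.mod_two_eq_zero_or_one i with h | h <;> rcases Nat.mod_two_eq_zero_or_one j with h' | h'
    · rw [if_pos h, if_pos h']
      have := ho4 (i/2) (j/2) (by omega) (by omega)
      intro e
      apply this; linarith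
    · rw [if_pos h, if_neg (by omega)]
      intro e; linarith [a1.2, b2.1]
    · rw [if_neg (by omega), if_pos h']
      intro e; linarith [a2.1, b1.2]
    · rw [if_neg (by omega), if_neg (by omega)]
      intro e
      have e' : o (i/2+1) = o (j/2+1) := by linarith
      rcases Nat.lt_or_ge (j/2+1) m with h3 | h3
      · exact ho4 _ _ (by omega) h3 e'
      · have : j/2+1 = 0 + m := by omega
        rw [this, ho3] at e'
        exact ho4 0 (i/2+1) (by omega) (by omega) e'.symm

lemma exists_f (q : ℕ) (lam : ℝ)
    (hbase : ∃ f : ℝ → ℝ, Continuous f ∧ (∀ x ∈ Set.Icc (0:ℝ) 1, f x ∈ Set.Icc (0:ℝ) 1) ∧ HasOrbit f q ∧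
      ∀ μ : ℝ, 1 < μ → lam < μ → GoodMap f μ) (n : ℕ) :
    ∃ f : ℝ → ℝ, Continuous f ∧ (∀ x ∈ Set.Icc (0:ℝ) 1, f x ∈ Set.Icc (0:ℝ) 1) ∧ HasOrbit f (2^n * q) ∧
      ∀ μ : ℝ, 1 < μ → lam < μ ^ (2^n) → GoodMap f μ := by
  induction n with
  | zero => simpa using hbase
  | succ n ih =>
    obtain ⟨f, hc, hm, ho, hg⟩ := ih
    refine ⟨Dbl f, ?_, ?_, ?_, ?_⟩
    · unfold Dbl
      have := cl01_cont
      fun_prop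
    · intro x hx
      have h1 := hm 1 (by simp)
      have h2 := hm _ ⟨cl01_nonneg (3*x), cl01_le (3*x)⟩
      simp only [Dbl]
      rcases le_total x (1/3) with h | h
      · rw [cl01_of_le (show 3*x-1 ≤ 0 by linarith), cl01_of_le (show 3*x-2 ≤ 0 by linarith)]
        constructor <;> linarith [h2.1, h2.2]
      · rw [cl01_of_ge (show 1 ≤ 3*x by linarith)]
        rcases le_total x (2/3) with h' | h'
        · rw [cl01_of_mem (show 0 ≤ 3*x-1 by linarith) (by linarith), cl01_of_le (show 3*x-2 ≤ 0 by linarith)]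
          constructor <;> nlinarith [h1.1, h1.2]
        · rw [cl01_of_ge (show 1 ≤ 3*x-1 by linarith)]
          have := cl01_nonneg (3*x-2)
          have := cl01_le (3*x-2)
          constructor <;> linarith
    · rw [pow_succ', mul_assoc]; exact orbit_step f _ ho
    · intro μ h1 h2
      apply good_step f hm μ h1
      apply hg
      · nlinarith
      · rw [← pow_mul, ← pow_succ']; exact h2

/-- entropy lower bound `log(λ_q)/2^n` from a periodic orbit of strips of
period `2^n·q` (`q` odd), and sharpness of the bound. -/
theorem entropy_bound_from_period (nn q : ℕ) (hq : Odd q) (hq1 : 1 ≤ q) (lam : ℝ)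
    (hlam : (q = 1 ∧ lam = 1) ∨
      (3 ≤ q ∧ lam ^ q - 2 * lam ^ (q - 2) - 1 = 0 ∧
        ∀ y : ℝ, y ^ q - 2 * y ^ (q - 2) - 1 = 0 → y ≤ lam)) :
    (∀ F : Cyl → Cyl, IsQPF F →
      (∃ B : Set Cyl, IsPeriodicStripOrbit F (2 ^ nn * q) B) →
      ((Real.log lam / 2 ^ nn : ℝ) : EReal) ≤ hTop F) ∧
    (∃ Fm : Cyl → Cyl, IsQPF Fm ∧
      (∃ B : Set Cyl, IsPeriodicStripOrbit Fm (2 ^ nn * q) B) ∧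
      hTop Fm = ((Real.log lam / 2 ^ nn : ℝ) : EReal)) := by
  have part1 : ∀ F : Cyl → Cyl, IsQPF F →
      (∃ B : Set Cyl, IsPeriodicStripOrbit F (2 ^ nn * q) B) →
      ((Real.log lam / 2 ^ nn : ℝ) : EReal) ≤ hTop F := by
    rintro F hF ⟨B, hB⟩
    unfold hTop
    rcases hlam with ⟨rfl, rfl⟩ | ⟨h3, hl, hmax⟩
    · simp only [Real.log_one, zero_div, EReal.coe_zero]
      exact coverEntropy_nonneg F ⟨(0, ⟨0, by simp⟩), Set.mem_univ _⟩
    · have := lower_bound (2 ^ nn) q Nat.one_le_two_pow h3 hq lam hl (lam_gt_one h3 hmax) F hF B hB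
      push_cast at this
      push_cast
      exact this
  refine ⟨part1, ?_⟩
  have hlam1 : 1 ≤ lam := by
    rcases hlam with ⟨rfl, rfl⟩ | ⟨h3, hl, hmax⟩
    · exact le_rfl
    · exact (lam_gt_one h3 hmax).le
  have hbase : ∃ f : ℝ → ℝ, Continuous f ∧ (∀ x ∈ Set.Icc (0:ℝ) 1, f x ∈ Set.Icc (0:ℝ) 1) ∧ HasOrbit f q ∧
      ∀ μ : ℝ, 1 < μ → lam < μ → GoodMap f μ := by
    rcases hlam with ⟨rfl, rfl⟩ | ⟨h3, hl, hmax⟩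
    · obtain ⟨f, h1, h2, h4, h5⟩ := base_one
      exact ⟨f, h1, h2, h4, fun μ hμ _ => h5 μ hμ⟩
    · obtain ⟨f, h1, h2, h4, h5⟩ := base_three q h3 hq lam (lam_gt_one h3 hmax) hl
      exact ⟨f, h1, h2, h4, fun μ _ hμ => h5 μ hμ⟩
  obtain ⟨f, hc, hm, ho, hg⟩ := exists_f q lam hbase nn
  let Fm : Cyl → Cyl := fun p => (p.1 + ((√2 : ℝ) : S1), ⟨f p.2, hm _ p.2.2⟩)
  have hQ : IsQPF Fm := by
    refine ⟨?_, √2, irrational_sqrt_two, fun p => rfl⟩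
    refine Continuous.prodMk (by fun_prop) ?_
    exact Continuous.subtype_mk (hc.comp (continuous_subtype_val.comp continuous_snd)) _
  have hO := strip_orbit ((√2 : ℝ) : S1) f Fm (fun _ => rfl) (fun _ => rfl) _ ho
  refine ⟨Fm, hQ, hO, le_antisymm ?_ (part1 Fm hQ hO)⟩
  refine EReal.le_of_forall_lt_iff_le.1 fun z hz => ?_
  have hz' : Real.log lam / 2 ^ nn < z := EReal.coe_lt_coe_iff.1 hz
  obtain ⟨a, ha1, ha2⟩ := exists_between hz'
  have hp : (0:ℝ) < 2 ^ nn := by positivity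
  have ha0 : 0 < a := lt_of_le_of_lt (div_nonneg (Real.log_nonneg hlam1) hp.le) ha1
  have hμ : 1 < Real.exp a := Real.one_lt_exp_iff.2 ha0
  have hμ2 : lam < Real.exp a ^ (2 ^ nn) := by
    rw [← Real.exp_nat_mul, ← Real.log_lt_iff_lt_exp (by linarith)]
    push_cast
    rw [div_lt_iff₀ hp] at ha1
    linarith
  exact upper_bound ((√2 : ℝ) : S1) f Fm (fun _ => rfl) (fun _ => rfl) (Real.exp a) z hμ.le
    (hg _ hμ hμ2) (by rwa [Real.log_exp])
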